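/- Let H₁ and H₂ be finite-dimensional Hilbert spaces and K an invertible matrix on H₁ ⊗ H₂. Let p, q, r, s be real parameters with 0 < p, q ≤ 1, −1 ≤ r < 0, q + r > 0, p + q + r > 0, and (q+r)/(p+q+r) ≤ s < 1/(p+q+r). For A positive definite on H₁ ⊗ H₂ and B positive definite on H₂, define Q(A,B) := inf_C Tr[(A^{p/2} K (I₁ ⊗ B^{q/2} C^r B^{q/2}) K† A^{p/2})^s], the infimum taken over all positive definite density matrices C on H₂. Then Q is jointly log-concave: for all positive definite A₀, A₁ on H₁ ⊗ H₂, all positive definite B₀, B₁ on H₂, and all t ∈ [0,1], Q(t·A₀+(1−t)·A₁, t·B₀+(1−t)·B₁) ≥ Q(A₀,B₀)^t · Q(A₁,B₁)^{1−t}. -/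

import Mathlib

open scoped Kronecker ComplexOrder
open Matrix

/-- Real power of a (Hermitian, in practice positive semidefinite) matrix, defined spectrally:
positive eigenvalues are raised to the power `t`, zero (and negative) eigenvalues are sent to `0`. -/
noncomputable def matPow {n : Type*} [Fintype n] [DecidableEq n]
    (M : Matrix n n ℂ) (t : ℝ) : Matrix n n ℂ :=
  if hM : M.IsHermitian then
    (hM.eigenvectorUnitary : Matrix n n ℂ) *
      Matrix.diagonal (fun i =>
        ((if 0 < hM.eigenvalues i then (hM.eigenvalues i) ^ t else 0 : ℝ) : ℂ)) *
      (star (hM.eigenvectorUnitary : Matrix n n ℂ))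
  else 0

/-- Partial trace over the first tensor factor. -/
noncomputable def ptraceFst {m n : Type*} [Fintype m] [Fintype n]
    (M : Matrix (m × n) (m × n) ℂ) : Matrix n n ℂ :=
  Matrix.of fun j j' => ∑ i, M (i, j) (i, j')

/-- Partial trace over the second tensor factor. -/
noncomputable def ptraceSnd {m n : Type*} [Fintype m] [Fintype n]
    (M : Matrix (m × n) (m × n) ℂ) : Matrix m m ℂ :=
  Matrix.of fun i i' => ∑ j, M (i, j) (i', j)

/-- A density matrix: positive semidefinite with unit trace. -/
def IsDensity {n : Type*} [Fintype n] [DecidableEq n] (ρ : Matrix n n ℂ) : Prop :=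
  ρ.PosSemidef ∧ ρ.trace = 1

/-- The optimized trace functional of Statement 1:
`Q(A,B) = inf_C Tr[(A^{p/2} K (I₁ ⊗ B^{q/2} C^r B^{q/2}) K† A^{p/2})^s]`,
the infimum over all positive definite density matrices `C` on `H₂`. -/
noncomputable def Qinf {n₁ n₂ : Type*} [Fintype n₁] [DecidableEq n₁]
    [Fintype n₂] [DecidableEq n₂] (K : Matrix (n₁ × n₂) (n₁ × n₂) ℂ) (p q r s : ℝ)
    (A : Matrix (n₁ × n₂) (n₁ × n₂) ℂ) (B : Matrix n₂ n₂ ℂ) : ℝ :=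
  sInf {x | ∃ C : Matrix n₂ n₂ ℂ, C.PosDef ∧ C.trace = 1 ∧
    x = (Matrix.trace (matPow
      (matPow A (p / 2) * K *
        ((1 : Matrix n₁ n₁ ℂ) ⊗ₖ (matPow B (q / 2) * matPow C r * matPow B (q / 2))) *
        Kᴴ * matPow A (p / 2)) s)).re}


set_option linter.all false
set_option linter.unusedSectionVars false

/-- real part of the trace -/
noncomputable def rtr {n : Type*} [Fintype n] (M : Matrix n n ℂ) : ℝ := (Matrix.trace M).re

/-- real diagonal matrix -/
noncomputable def rdiag {n : Type*} [DecidableEq n] (a : n → ℝ) : Matrix n n ℂ :=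
  Matrix.diagonal (fun i => (a i : ℂ))

section api
variable {n m k : Type*} [Fintype n] [DecidableEq n] [Fintype m] [DecidableEq m]
  [Fintype k] [DecidableEq k]

lemma rdiag_mul (a b : n → ℝ) : rdiag a * rdiag b = rdiag (fun i => a i * b i) := by
  simp [rdiag]

lemma rdiag_conjTranspose (a : n → ℝ) : (rdiag a)ᴴ = rdiag a := by
  simp [rdiag, Matrix.diagonal_conjTranspose]

lemma unitary_of_left {U : Matrix n n ℂ} (h : Uᴴ * U = 1) : U * Uᴴ = 1 :=
  mul_eq_one_comm.mp h

lemma matPow_rdiag {U : Matrix n n ℂ} (hU : Uᴴ * U = 1) {a : n → ℝ} (ha : ∀ i, 0 < a i) (t : ℝ) :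
    matPow (U * rdiag a * Uᴴ) t = U * rdiag (fun i => a i ^ t) * Uᴴ := by
  have hU2 := unitary_of_left hU
  have hM : (U * rdiag a * Uᴴ).IsHermitian := by
    simp [Matrix.IsHermitian, Matrix.conjTranspose_mul, rdiag_conjTranspose, Matrix.mul_assoc]
  have hpd : (U * rdiag a * Uᴴ).PosDef := by
    have h1 : (rdiag a).PosDef := by
      unfold rdiag; rw [Matrix.posDef_diagonal_iff]; intro i; exact_mod_cast ha i
    apply h1.mul_mul_conjTranspose_same
    rw [Matrix.vecMul_injective_iff_isUnit]
    exact ⟨⟨U, Uᴴ, hU2, hU⟩, rfl⟩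
  set M := U * rdiag a * Uᴴ with hMdef
  have hpos := hpd.eigenvalues_pos
  rw [matPow, dif_pos hM]
  set V : Matrix n n ℂ := (hM.eigenvectorUnitary : Matrix n n ℂ) with hV
  have hVV : Vᴴ * V = 1 := by
    have := Unitary.coe_star_mul_self hM.eigenvectorUnitary
    simpa [Matrix.star_eq_conjTranspose] using this
  have hVV2 := unitary_of_left hVV
  have hspec : M = V * rdiag hM.eigenvalues * Vᴴ := by
    have := hM.spectral_theorem
    rw [Unitary.conjStarAlgAut_apply] at this
    exact this
  set b := hM.eigenvalues with hb
  have e1 : (fun i => ((if 0 < b i then b i ^ t else 0 : ℝ) : ℂ)) = fun i => ((b i ^ t : ℝ) : ℂ) := by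
    funext i; rw [if_pos (hpos i)]
  rw [e1]
  change V * rdiag (fun i => b i ^ t) * Vᴴ = _
  have key : rdiag a * (Uᴴ * V) = (Uᴴ * V) * rdiag b := by
    have : Uᴴ * M * V = rdiag a * (Uᴴ * V) := by
      rw [hMdef]; simp only [← Matrix.mul_assoc]; rw [hU]; simp
    rw [← this, hspec]
    simp only [Matrix.mul_assoc]; rw [hVV]; simp
  have key2 : rdiag (fun i => a i ^ t) * (Uᴴ * V) = (Uᴴ * V) * rdiag (fun i => b i ^ t) := by
    ext i j
    have h := congrFun (congrFun key i) j
    simp only [rdiag, Matrix.diagonal_mul, Matrix.mul_diagonal] at h ⊢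
    by_cases h0 : (Uᴴ * V) i j = 0
    · rw [h0]; simp
    · have : (a i : ℂ) = b j := by
        rw [mul_comm] at h; exact mul_left_cancel₀ h0 h
      have : a i = b j := by exact_mod_cast this
      rw [this, mul_comm]
  calc V * rdiag (fun i => b i ^ t) * Vᴴ = U * ((Uᴴ * V) * rdiag (fun i => b i ^ t)) * Vᴴ := by
        simp only [← Matrix.mul_assoc]; rw [hU2]; simp
    _ = U * rdiag (fun i => a i ^ t) * Uᴴ * (V * Vᴴ) := by
        rw [← key2]; simp only [Matrix.mul_assoc]
    _ = _ := by rw [hVV2]; simp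

lemma posDef_rdiag {U : Matrix n n ℂ} (hU : Uᴴ * U = 1) {a : n → ℝ} (ha : ∀ i, 0 < a i) :
    (U * rdiag a * Uᴴ).PosDef := by
  have hU2 := unitary_of_left hU
  have h1 : (rdiag a).PosDef := by
    unfold rdiag; rw [Matrix.posDef_diagonal_iff]; intro i; exact_mod_cast ha i
  apply h1.mul_mul_conjTranspose_same
  rw [Matrix.vecMul_injective_iff_isUnit]
  exact ⟨⟨U, Uᴴ, hU2, hU⟩, rfl⟩

lemma posDef_spec {A : Matrix n n ℂ} (hA : A.PosDef) :
    ∃ (U : Matrix n n ℂ) (a : n → ℝ), Uᴴ * U = 1 ∧ (∀ i, 0 < a i) ∧ A = U * rdiag a * Uᴴ := by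
  refine ⟨(hA.1.eigenvectorUnitary : Matrix n n ℂ), hA.1.eigenvalues, ?_, hA.eigenvalues_pos, ?_⟩
  · have := Unitary.coe_star_mul_self hA.1.eigenvectorUnitary
    simpa [Matrix.star_eq_conjTranspose] using this
  · have := hA.1.spectral_theorem
    rw [Unitary.conjStarAlgAut_apply] at this
    exact this

lemma matPow_posDef {A : Matrix n n ℂ} (hA : A.PosDef) (t : ℝ) : (matPow A t).PosDef := by
  obtain ⟨U, a, hU, ha, rfl⟩ := posDef_spec hA
  rw [matPow_rdiag hU ha]
  exact posDef_rdiag hU fun i => Real.rpow_pos_of_pos (ha i) t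

lemma matPow_herm {A : Matrix n n ℂ} (hA : A.PosDef) (t : ℝ) : (matPow A t)ᴴ = matPow A t :=
  (matPow_posDef hA t).1

lemma matPow_mul {A : Matrix n n ℂ} (hA : A.PosDef) (s t : ℝ) :
    matPow A s * matPow A t = matPow A (s + t) := by
  obtain ⟨U, a, hU, ha, rfl⟩ := posDef_spec hA
  simp only [matPow_rdiag hU ha]
  have : (fun i => a i ^ (s + t)) = fun i => a i ^ s * a i ^ t := by
    funext i; exact Real.rpow_add (ha i) s t
  rw [this, ← rdiag_mul]
  calc _ = U * rdiag (fun i => a i ^ s) * (Uᴴ * U) * rdiag (fun i => a i ^ t) * Uᴴ := by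
        simp only [Matrix.mul_assoc]
    _ = _ := by rw [hU]; simp [Matrix.mul_assoc]

lemma matPow_zero {A : Matrix n n ℂ} (hA : A.PosDef) : matPow A 0 = 1 := by
  obtain ⟨U, a, hU, ha, rfl⟩ := posDef_spec hA
  rw [matPow_rdiag hU ha]
  simp [rdiag, unitary_of_left hU]

lemma matPow_one {A : Matrix n n ℂ} (hA : A.PosDef) : matPow A 1 = A := by
  obtain ⟨U, a, hU, ha, rfl⟩ := posDef_spec hA
  rw [matPow_rdiag hU ha]
  simp

lemma matPow_matPow {A : Matrix n n ℂ} (hA : A.PosDef) (s t : ℝ) :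
    matPow (matPow A s) t = matPow A (s * t) := by
  obtain ⟨U, a, hU, ha, rfl⟩ := posDef_spec hA
  simp only [matPow_rdiag hU ha]
  rw [matPow_rdiag hU fun i => Real.rpow_pos_of_pos (ha i) s]
  simp only [Real.rpow_mul (ha _).le]

lemma smul_rdiag (c : ℝ) (a : n → ℝ) : (c : ℂ) • rdiag a = rdiag (fun i => c * a i) := by
  ext i j; by_cases h : i = j <;> simp [rdiag, h]

lemma matPow_smul {A : Matrix n n ℂ} (hA : A.PosDef) {c : ℝ} (hc : 0 < c) (t : ℝ) :
    matPow ((c : ℂ) • A) t = ((c ^ t : ℝ) : ℂ) • matPow A t := by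
  obtain ⟨U, a, hU, ha, rfl⟩ := posDef_spec hA
  have : ((c : ℂ) • (U * rdiag a * Uᴴ)) = U * rdiag (fun i => c * a i) * Uᴴ := by
    rw [← smul_rdiag]; simp
  rw [this, matPow_rdiag hU ha, matPow_rdiag hU fun i => mul_pos hc (ha i)]
  simp only [Real.mul_rpow hc.le (ha _).le]
  rw [← smul_rdiag]; simp

lemma matPow_conj {A V : Matrix n n ℂ} (hA : A.PosDef) (hV : Vᴴ * V = 1) (t : ℝ) :
    matPow (V * A * Vᴴ) t = V * matPow A t * Vᴴ := by
  obtain ⟨U, a, hU, ha, rfl⟩ := posDef_spec hA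
  have h1 : (V * U)ᴴ * (V * U) = 1 := by
    rw [Matrix.conjTranspose_mul]
    calc _ = Uᴴ * (Vᴴ * V) * U := by simp only [Matrix.mul_assoc]
      _ = 1 := by rw [hV]; simp [hU]
  have : V * (U * rdiag a * Uᴴ) * Vᴴ = (V * U) * rdiag a * (V * U)ᴴ := by
    rw [Matrix.conjTranspose_mul]; simp only [Matrix.mul_assoc]
  rw [this, matPow_rdiag hU ha, matPow_rdiag h1 ha, Matrix.conjTranspose_mul]
  simp only [Matrix.mul_assoc]

lemma matPow_inv {A : Matrix n n ℂ} (hA : A.PosDef) (s : ℝ) :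
    matPow A s * matPow A (-s) = 1 := by
  rw [matPow_mul hA, add_neg_cancel, matPow_zero hA]

lemma matPow_inv' {A : Matrix n n ℂ} (hA : A.PosDef) (s : ℝ) :
    matPow A (-s) * matPow A s = 1 := by
  rw [matPow_mul hA, neg_add_cancel, matPow_zero hA]

lemma matPow_isUnit {A : Matrix n n ℂ} (hA : A.PosDef) (s : ℝ) : IsUnit (matPow A s) :=
  (matPow_posDef hA s).isUnit

lemma posDef_conj {A : Matrix n n ℂ} (hA : A.PosDef) {G : Matrix n n ℂ} (hG : IsUnit G) :
    (G * A * Gᴴ).PosDef := by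
  apply hA.mul_mul_conjTranspose_same
  rwa [Matrix.vecMul_injective_iff_isUnit]

lemma posDef_conj' {A : Matrix n n ℂ} (hA : A.PosDef) {G : Matrix n n ℂ} (hG : IsUnit G) :
    (Gᴴ * A * G).PosDef := by
  apply hA.conjTranspose_mul_mul_same
  rwa [Matrix.mulVec_injective_iff_isUnit]

lemma posDef_self {G : Matrix n n ℂ} (hG : IsUnit G) : (G * Gᴴ).PosDef := by
  simpa using posDef_conj Matrix.PosDef.one hG

lemma posDef_self' {G : Matrix n n ℂ} (hG : IsUnit G) : (Gᴴ * G).PosDef := by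
  simpa using posDef_conj' Matrix.PosDef.one hG

lemma rtr_mul_comm (A : Matrix n m ℂ) (B : Matrix m n ℂ) : rtr (A * B) = rtr (B * A) := by
  rw [rtr, Matrix.trace_mul_comm, rtr]

lemma rtr_add (A B : Matrix n n ℂ) : rtr (A + B) = rtr A + rtr B := by
  simp [rtr]

lemma rtr_sub (A B : Matrix n n ℂ) : rtr (A - B) = rtr A - rtr B := by
  simp [rtr]

lemma rtr_smul (c : ℝ) (A : Matrix n n ℂ) : rtr ((c : ℂ) • A) = c * rtr A := by
  simp [rtr]

lemma rtr_sum {ι : Type*} (s : Finset ι) (A : ι → Matrix n n ℂ) :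
    rtr (∑ i ∈ s, A i) = ∑ i ∈ s, rtr (A i) := by
  simp [rtr, Matrix.trace_sum]

lemma rtr_nonneg {A : Matrix n n ℂ} (hA : A.PosSemidef) : 0 ≤ rtr A := by
  have := hA.trace_nonneg
  exact (Complex.le_def.mp this).1

lemma rtr_pos [Nonempty n] {A : Matrix n n ℂ} (hA : A.PosDef) : 0 < rtr A := by
  have := hA.trace_pos
  exact (Complex.lt_def.mp this).1

lemma rtr_rdiag {U : Matrix n n ℂ} (hU : Uᴴ * U = 1) (a : n → ℝ) :
    rtr (U * rdiag a * Uᴴ) = ∑ i, a i := by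
  rw [rtr_mul_comm, ← Matrix.mul_assoc, hU]
  simp [rtr, rdiag, Matrix.trace]

/-- `Tr f(GG†) = Tr f(G†G)` -/
lemma rtr_flip {G : Matrix n n ℂ} (hG : IsUnit G) (s : ℝ) :
    rtr (matPow (G * Gᴴ) s) = rtr (matPow (Gᴴ * G) s) := by
  have hD := posDef_self' hG
  set D := Gᴴ * G with hDdef
  set V := G * matPow D (-(1/2)) with hV
  have hVV : Vᴴ * V = 1 := by
    rw [hV, Matrix.conjTranspose_mul, matPow_herm hD]
    calc _ = matPow D (-(1/2)) * D * matPow D (-(1/2)) := by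
          rw [hDdef]; simp only [Matrix.mul_assoc]
      _ = matPow D (-(1/2)) * matPow D 1 * matPow D (-(1/2)) := by rw [matPow_one hD]
      _ = 1 := by rw [matPow_mul hD, matPow_mul hD]; norm_num; exact matPow_zero hD
  have h1 : G * Gᴴ = V * D * Vᴴ := by
    rw [hV, Matrix.conjTranspose_mul, matPow_herm hD]
    calc _ = G * (matPow D (-(1/2)) * matPow D 1 * matPow D (-(1/2))) * Gᴴ := by
          rw [matPow_mul hD, matPow_mul hD]; norm_num; rw [matPow_zero hD]; simp
      _ = _ := by rw [matPow_one hD]; simp only [Matrix.mul_assoc]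
  rw [h1, matPow_conj hD hVV, rtr_mul_comm, ← Matrix.mul_assoc, hVV, Matrix.one_mul]

/-- double sum formula -/
lemma rtr_double (U : Matrix n n ℂ) (W : Matrix m m ℂ) (a : n → ℝ) (b : m → ℝ)
    (V : Matrix n m ℂ) :
    rtr ((U * rdiag a * Uᴴ) * V * (W * rdiag b * Wᴴ) * Vᴴ) =
      ∑ i, ∑ j, a i * b j * Complex.normSq ((Uᴴ * V * W) i j) := by
  have : rtr ((U * rdiag a * Uᴴ) * V * (W * rdiag b * Wᴴ) * Vᴴ) =
      rtr (rdiag a * ((Uᴴ * V * W) * rdiag b * (Uᴴ * V * W)ᴴ)) := by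
    rw [show (U * rdiag a * Uᴴ) * V * (W * rdiag b * Wᴴ) * Vᴴ =
      U * (rdiag a * Uᴴ * V * (W * rdiag b * Wᴴ) * Vᴴ) by simp only [Matrix.mul_assoc]]
    rw [rtr_mul_comm]
    simp only [Matrix.conjTranspose_mul, Matrix.conjTranspose_conjTranspose, Matrix.mul_assoc]
  rw [this]
  set T := Uᴴ * V * W
  simp only [rtr, rdiag, Matrix.trace, Matrix.diag_apply, Matrix.diagonal_mul]
  rw [Complex.re_sum]
  refine Finset.sum_congr rfl fun i _ => ?_
  rw [Matrix.mul_apply]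
  simp only [Matrix.mul_diagonal, Matrix.conjTranspose_apply]
  rw [Finset.mul_sum, Complex.re_sum]
  refine Finset.sum_congr rfl fun j _ => ?_
  have : (a i : ℂ) * (T i j * (b j : ℂ) * star (T i j)) = ((a i * b j * Complex.normSq (T i j) : ℝ) : ℂ) := by
    push_cast
    rw [Complex.normSq_eq_conj_mul_self]; simp; ring
  rw [this, Complex.ofReal_re]

lemma rtr_mul_nonneg {A B : Matrix n n ℂ} (hA : A.PosSemidef) (hB : B.PosDef) : 0 ≤ rtr (A * B) := by
  have h : matPow B (1/2) * matPow B (1/2) = B := by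
    rw [matPow_mul hB]; norm_num; exact matPow_one hB
  have : rtr (A * B) = rtr (matPow B (1/2) * A * (matPow B (1/2))ᴴ) := by
    rw [matPow_herm hB, rtr_mul_comm (matPow B (1/2) * A), ← Matrix.mul_assoc, h, rtr_mul_comm]
  rw [this]
  exact rtr_nonneg (hA.mul_mul_conjTranspose_same _)

end api

section holder
variable {n m k : Type*} [Fintype n] [DecidableEq n] [Fintype m] [DecidableEq m]
  [Fintype k] [DecidableEq k]

lemma two_spec {M : Matrix n n ℂ} {W : Matrix m m ℂ} (hM : M.PosDef) (hW : W.PosDef)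
    (V : Matrix n m ℂ) :
    ∃ (μ : n → ℝ) (w : m → ℝ) (d : n → m → ℝ), (∀ i, 0 < μ i) ∧ (∀ j, 0 < w j) ∧
      (∀ i j, 0 ≤ d i j) ∧ ∀ s t : ℝ, rtr (matPow M s * V * matPow W t * Vᴴ) =
        ∑ i, ∑ j, μ i ^ s * w j ^ t * d i j := by
  obtain ⟨U, a, hU, ha, rfl⟩ := posDef_spec hM
  obtain ⟨X, b, hX, hb, rfl⟩ := posDef_spec hW
  refine ⟨a, b, fun i j => Complex.normSq ((Uᴴ * V * X) i j), ha, hb,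
    fun i j => Complex.normSq_nonneg _, fun s t => ?_⟩
  rw [matPow_rdiag hU ha, matPow_rdiag hX hb, rtr_double]

lemma dsum_le {ι κ : Type*} [Fintype ι] [Fintype κ] {d f g h : ι → κ → ℝ} {x y : ℝ}
    (hd : ∀ i j, 0 ≤ d i j) (hf : ∀ i j, f i j ≤ x * g i j + y * h i j) :
    ∑ i, ∑ j, f i j * d i j ≤ x * ∑ i, ∑ j, g i j * d i j + y * ∑ i, ∑ j, h i j * d i j := by
  simp only [Finset.mul_sum, ← Finset.sum_add_distrib]
  refine Finset.sum_le_sum fun i _ => Finset.sum_le_sum fun j _ => ?_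
  have := mul_le_mul_of_nonneg_right (hf i j) (hd i j)
  linarith

lemma young_scalar {u x w : ℝ} (hu : 1 ≤ u) (hx : 0 < x) (hw : 0 < w) :
    x * w ^ (1 - 1/u) ≤ (1/u) * x ^ u + (1 - 1/u) * w := by
  have hu0 : 0 < u := by linarith
  set z := x * w ^ (-(1/u)) with hz
  have hz0 : 0 < z := mul_pos hx (Real.rpow_pos_of_pos hw _)
  have h := one_add_mul_self_le_rpow_one_add (s := z - 1) (by linarith) hu
  have e1 : (1 + (z - 1)) ^ u = x ^ u * w⁻¹ := by
    rw [add_sub_cancel, hz, Real.mul_rpow hx.le (Real.rpow_pos_of_pos hw _).le, ← Real.rpow_mul hw.le,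
      show -(1/u) * u = -1 by field_simp, Real.rpow_neg_one]
  rw [e1] at h
  have e2 : x * w ^ (1 - 1/u) = z * w := by
    rw [hz, sub_eq_add_neg, Real.rpow_add hw, Real.rpow_one]; ring
  rw [e2]
  have h2 : z ≤ (1/u) * (x ^ u * w⁻¹) + (1 - 1/u) := by
    have h3 : u * z ≤ x ^ u * w⁻¹ + (u - 1) := by linarith
    calc z = (1/u) * (u * z) := by field_simp
      _ ≤ (1/u) * (x ^ u * w⁻¹ + (u - 1)) := by gcongr
      _ = _ := by field_simp
  calc z * w ≤ ((1/u) * (x ^ u * w⁻¹) + (1 - 1/u)) * w := by gcongr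
    _ = _ := by field_simp

lemma young_scalar' {u x w : ℝ} (hu0 : 0 < u) (hu : u ≤ 1) (hx : 0 < x) (hw : 0 < w) :
    (1/u) * x ^ u + (1 - 1/u) * w ≤ x * w ^ (1 - 1/u) := by
  set z := x * w ^ (-(1/u)) with hz
  have hz0 : 0 < z := mul_pos hx (Real.rpow_pos_of_pos hw _)
  have h := rpow_one_add_le_one_add_mul_self (s := z - 1) (by linarith) hu0.le hu
  have e1 : (1 + (z - 1)) ^ u = x ^ u * w⁻¹ := by
    rw [add_sub_cancel, hz, Real.mul_rpow hx.le (Real.rpow_pos_of_pos hw _).le, ← Real.rpow_mul hw.le,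
      show -(1/u) * u = -1 by field_simp, Real.rpow_neg_one]
  rw [e1] at h
  have e2 : x * w ^ (1 - 1/u) = z * w := by
    rw [hz, sub_eq_add_neg, Real.rpow_add hw, Real.rpow_one]; ring
  rw [e2]
  have h2 : (1/u) * (x ^ u * w⁻¹) + (1 - 1/u) ≤ z := by
    have h3 : x ^ u * w⁻¹ + (u - 1) ≤ u * z := by linarith
    calc _ = (1/u) * (x ^ u * w⁻¹ + (u - 1)) := by field_simp
      _ ≤ (1/u) * (u * z) := by gcongr
      _ = z := by field_simp
  calc _ = ((1/u) * (x ^ u * w⁻¹) + (1 - 1/u)) * w := by field_simp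
    _ ≤ z * w := by gcongr

lemma nonempty_of_rtr {W : Matrix n n ℂ} (h1 : rtr W = 1) : Nonempty n := by
  by_contra h
  rw [not_nonempty_iff] at h
  simp [rtr, Matrix.trace] at h1

lemma holder2 {M W : Matrix n n ℂ} (hM : M.PosDef) (hW : W.PosDef) (h1 : rtr W = 1) {u : ℝ}
    (hu : 1 ≤ u) : rtr (M * matPow W (1 - 1/u)) ≤ rtr (matPow M u) ^ (1/u) := by
  have hu0 : 0 < u := by linarith
  haveI := nonempty_of_rtr h1
  have hτ : 0 < rtr (matPow M u) := rtr_pos (matPow_posDef hM u)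
  set τ := rtr (matPow M u) with hτd
  set c := τ ^ (1/u) with hc
  have hc0 : 0 < c := Real.rpow_pos_of_pos hτ _
  have hcu : c ^ u = τ := by
    rw [hc, ← Real.rpow_mul hτ.le]; simp [hu0.ne']
  obtain ⟨μ, w, d, hμ, hw, hd, H⟩ := two_spec hM hW 1
  have e1 := H 1 (1 - 1/u)
  have e2 := H u 0
  have e3 := H 0 1
  simp only [matPow_one hM, matPow_zero hM, matPow_zero hW, matPow_one hW, Matrix.mul_one,
    Matrix.conjTranspose_one, Matrix.one_mul] at e1 e2 e3
  rw [e1]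
  have hf : ∀ i j, μ i ^ (1:ℝ) * w j ^ (1 - 1/u) ≤
      (c * (1/u) * τ⁻¹) * (μ i ^ u * w j ^ (0:ℝ)) + (c * (1 - 1/u)) * (μ i ^ (0:ℝ) * w j ^ (1:ℝ)) := by
    intro i j
    have := young_scalar hu (div_pos (hμ i) hc0) (hw j)
    rw [Real.div_rpow (hμ i).le hc0.le, hcu] at this
    simp only [Real.rpow_one, Real.rpow_zero, mul_one, one_mul]
    calc μ i * w j ^ (1 - 1/u) = c * (μ i / c * w j ^ (1 - 1/u)) := by field_simp
      _ ≤ c * (1 / u * (μ i ^ u / τ) + (1 - 1 / u) * w j) := by gcongr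
      _ = _ := by ring
  refine (dsum_le hd hf).trans ?_
  rw [← e2, ← e3, ← hτd, h1]
  apply le_of_eq
  field_simp; ring

lemma holder2_rev {M W : Matrix n n ℂ} (hM : M.PosDef) (hW : W.PosDef) (h1 : rtr W = 1) {u : ℝ}
    (hu0 : 0 < u) (hu : u ≤ 1) : rtr (matPow M u) ^ (1/u) ≤ rtr (M * matPow W (1 - 1/u)) := by
  haveI := nonempty_of_rtr h1
  have hτ : 0 < rtr (matPow M u) := rtr_pos (matPow_posDef hM u)
  set τ := rtr (matPow M u) with hτd
  set c := τ ^ (1/u) with hc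
  have hc0 : 0 < c := Real.rpow_pos_of_pos hτ _
  have hcu : c ^ u = τ := by
    rw [hc, ← Real.rpow_mul hτ.le]; simp [hu0.ne']
  obtain ⟨μ, w, d, hμ, hw, hd, H⟩ := two_spec hM hW 1
  have e1 := H 1 (1 - 1/u)
  have e2 := H u 0
  have e3 := H 0 1
  simp only [matPow_one hM, matPow_zero hM, matPow_zero hW, matPow_one hW, Matrix.mul_one,
    Matrix.conjTranspose_one, Matrix.one_mul] at e1 e2 e3
  rw [e1]
  have hf : ∀ i j, -(μ i ^ (1:ℝ) * w j ^ (1 - 1/u)) ≤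
      (-(c * (1/u) * τ⁻¹)) * (μ i ^ u * w j ^ (0:ℝ)) + (-(c * (1 - 1/u))) * (μ i ^ (0:ℝ) * w j ^ (1:ℝ)) := by
    intro i j
    have := young_scalar' hu0 hu (div_pos (hμ i) hc0) (hw j)
    rw [Real.div_rpow (hμ i).le hc0.le, hcu] at this
    simp only [Real.rpow_one, Real.rpow_zero, mul_one, one_mul]
    have h2 : c * (1 / u * (μ i ^ u / τ) + (1 - 1 / u) * w j) ≤ μ i * w j ^ (1 - 1/u) := by
      calc _ ≤ c * (μ i / c * w j ^ (1 - 1/u)) := by gcongr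
        _ = _ := by field_simp
    have e : c * (1 / u * (μ i ^ u / τ) + (1 - 1 / u) * w j) =
      c * (1/u) * τ⁻¹ * μ i ^ u + c * (1 - 1/u) * w j := by ring
    linarith
  have h3 := dsum_le hd hf
  simp only [neg_mul, Finset.sum_neg_distrib] at h3
  rw [← e2, ← e3, ← hτd, h1] at h3
  have e : c * (1/u) * τ⁻¹ * τ + c * (1 - 1/u) * 1 = c := by field_simp; ring
  linarith

/-- normalized power -/
noncomputable def dens (M : Matrix n n ℂ) (u : ℝ) : Matrix n n ℂ :=
  (((rtr (matPow M u))⁻¹ : ℝ) : ℂ) • matPow M u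

lemma posDef_smul {A : Matrix n n ℂ} (hA : A.PosDef) {c : ℝ} (hc : 0 < c) :
    ((c : ℂ) • A).PosDef := hA.smul (by exact_mod_cast hc)

lemma dens_posDef [Nonempty n] {M : Matrix n n ℂ} (hM : M.PosDef) (u : ℝ) : (dens M u).PosDef :=
  posDef_smul (matPow_posDef hM u) (inv_pos.mpr (rtr_pos (matPow_posDef hM u)))

lemma dens_rtr [Nonempty n] {M : Matrix n n ℂ} (hM : M.PosDef) (u : ℝ) : rtr (dens M u) = 1 := by
  rw [dens, rtr_smul, inv_mul_cancel₀ (rtr_pos (matPow_posDef hM u)).ne']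

lemma dens_pow [Nonempty n] {M : Matrix n n ℂ} (hM : M.PosDef) (u x : ℝ) :
    matPow (dens M u) x = ((rtr (matPow M u) ^ (-x) : ℝ) : ℂ) • matPow M (u * x) := by
  have h := rtr_pos (matPow_posDef hM u)
  rw [dens, matPow_smul (matPow_posDef hM u) (inv_pos.mpr h), matPow_matPow hM,
    Real.inv_rpow h.le, Real.rpow_neg h.le]

lemma matPow_mul_self {M : Matrix n n ℂ} (hM : M.PosDef) (x : ℝ) :
    M * matPow M x = matPow M (1 + x) := by
  rw [← matPow_mul hM, matPow_one hM]

lemma holder_eq [Nonempty n] {M : Matrix n n ℂ} (hM : M.PosDef) {u : ℝ} (hu : u ≠ 0) :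
    rtr (M * matPow (dens M u) (1 - 1/u)) = rtr (matPow M u) ^ (1/u) := by
  have h := rtr_pos (matPow_posDef hM u)
  rw [dens_pow hM, Matrix.mul_smul, rtr_smul, matPow_mul_self hM,
    show 1 + u * (1 - 1/u) = u by field_simp; ring]
  nth_rewrite 2 [← Real.rpow_one (rtr (matPow M u))]
  rw [← Real.rpow_add h]; congr 1; ring

lemma half_mul_half {M : Matrix n n ℂ} (hM : M.PosDef) :
    matPow M (1/2) * matPow M (1/2) = M := by
  rw [matPow_mul hM]; norm_num; exact matPow_one hM

/-- `N(P,X;s) = Tr (P^{1/2} X P^{1/2})^s` -/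
noncomputable def NN (P X : Matrix n n ℂ) (s : ℝ) : ℝ :=
  rtr (matPow (matPow P (1/2) * X * matPow P (1/2)) s)

lemma NN_posDef {P X : Matrix n n ℂ} (hP : P.PosDef) (hX : X.PosDef) :
    (matPow P (1/2) * X * matPow P (1/2)).PosDef := by
  have := posDef_conj hX (matPow_isUnit hP (1/2))
  rwa [matPow_herm hP] at this

lemma NN_pos [Nonempty n] {P X : Matrix n n ℂ} (hP : P.PosDef) (hX : X.PosDef) (s : ℝ) :
    0 < NN P X s := rtr_pos (matPow_posDef (NN_posDef hP hX) s)

/-- general flip -/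
lemma NN_flip {P X : Matrix n n ℂ} (hP : P.PosDef) {G : Matrix n n ℂ} (hG : IsUnit G)
    (hX : X = G * Gᴴ) (s : ℝ) : NN P X s = rtr (matPow (Gᴴ * P * G) s) := by
  have h1 := rtr_flip (G := matPow P (1/2) * G) ((matPow_isUnit hP _).mul hG) s
  rw [Matrix.conjTranspose_mul, matPow_herm hP] at h1
  rw [NN, hX]
  rw [show matPow P (1/2) * (G * Gᴴ) * matPow P (1/2) = matPow P (1/2) * G * (Gᴴ * matPow P (1/2)) by
    simp only [Matrix.mul_assoc], h1]
  rw [show Gᴴ * matPow P (1/2) * (matPow P (1/2) * G) = Gᴴ * (matPow P (1/2) * matPow P (1/2)) * G by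
    simp only [Matrix.mul_assoc], half_mul_half hP]

lemma NN_symm {P X : Matrix n n ℂ} (hP : P.PosDef) (hX : X.PosDef) (s : ℝ) :
    NN P X s = NN X P s := by
  rw [NN_flip hP (matPow_isUnit hX (1/2)) (by rw [matPow_herm hX, half_mul_half hX]), NN,
    matPow_herm hX]

lemma three_holder {P Q R : Matrix n n ℂ} (hP : P.PosDef) (hQ : Q.PosDef) (hR : R.PosDef)
    (hP1 : rtr P = 1) (hQ1 : rtr Q = 1) (hR1 : rtr R = 1) {a b c : ℝ} (ha : 0 < a) (hb : 0 < b)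
    (hc : 0 ≤ c) (habc : a + b + c = 1) :
    rtr (matPow P (a/2) * matPow Q b * matPow P (a/2) * matPow R c) ≤ 1 := by
  obtain ⟨μ, w, d, hμ, hw, hd, H⟩ := two_spec hQ hR (matPow P (a/2))
  have hbc : 0 < b + c := by linarith
  have e1 := H b c
  have e2 := H (b + c) 0
  have e3 := H 0 (b + c)
  simp only [matPow_zero hQ, matPow_zero hR, Matrix.mul_one, Matrix.one_mul, matPow_herm hP] at e1 e2 e3
  have f1 : rtr (matPow P (a/2) * matPow Q b * matPow P (a/2) * matPow R c) =
      rtr (matPow Q b * matPow P (a/2) * matPow R c * matPow P (a/2)) := by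
    rw [rtr_mul_comm _ (matPow P (a/2))]; simp only [Matrix.mul_assoc]
  have hq : ∀ S : Matrix n n ℂ, S.PosDef → rtr S = 1 → rtr (matPow P a * matPow S (b + c)) ≤ 1 := by
    intro S hS hS1
    have := holder2 (matPow_posDef hP a) hS hS1 (u := 1/a) (by rw [le_div_iff₀ ha]; linarith)
    rw [matPow_matPow hP, show a * (1/a) = 1 by field_simp, matPow_one hP, hP1] at this
    simpa [show (1:ℝ) - a = b + c by linarith] using this
  have g2 : rtr (matPow Q (b + c) * matPow P (a/2) * matPow P (a/2)) ≤ 1 := by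
    rw [Matrix.mul_assoc, matPow_mul hP, add_halves, rtr_mul_comm]; exact hq Q hQ hQ1
  have g3 : rtr (matPow P (a/2) * matPow R (b + c) * matPow P (a/2)) ≤ 1 := by
    rw [rtr_mul_comm, ← Matrix.mul_assoc, matPow_mul hP, add_halves]; exact hq R hR hR1
  rw [f1, e1]
  have hf : ∀ i j, μ i ^ b * w j ^ c ≤ (b/(b+c)) * (μ i ^ (b+c) * w j ^ (0:ℝ)) +
      (c/(b+c)) * (μ i ^ (0:ℝ) * w j ^ (b+c)) := by
    intro i j
    have := Real.geom_mean_le_arith_mean2_weighted (w₁ := b/(b+c)) (w₂ := c/(b+c)) (p₁ := μ i ^ (b+c))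
      (p₂ := w j ^ (b+c)) (by positivity) (by positivity) (Real.rpow_pos_of_pos (hμ i) _).le
      (Real.rpow_pos_of_pos (hw j) _).le (by field_simp)
    rw [← Real.rpow_mul (hμ i).le, ← Real.rpow_mul (hw j).le, mul_div_cancel₀ _ hbc.ne',
      mul_div_cancel₀ _ hbc.ne'] at this
    simpa using this
  refine (dsum_le hd hf).trans ?_
  rw [← e2, ← e3]
  have hbb : 0 ≤ b/(b+c) := by positivity
  have hcc : 0 ≤ c/(b+c) := by positivity
  have : b/(b+c) + c/(b+c) = 1 := by field_simp
  nlinarith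

lemma holder3 {X Y : Matrix n n ℂ} (hX : X.PosDef) (hY : Y.PosDef) {s u v : ℝ} (hs : 0 < s)
    (hu : 1 ≤ u) (hv : 0 < v) (huv : 1/s = 1/u + 1/v) :
    NN X Y s ≤ rtr (matPow X v) ^ (s/v) * rtr (matPow Y u) ^ (s/u) := by
  have hu0 : 0 < u := by linarith
  rcases isEmpty_or_nonempty n with hn | hn
  · have : NN X Y s = 0 := by simp [NN, rtr, Matrix.trace]
    rw [this]
    have h1 : rtr (matPow X v) = 0 := by simp [rtr, Matrix.trace]
    have h2 : rtr (matPow Y u) = 0 := by simp [rtr, Matrix.trace]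
    rw [h1, h2]; positivity
  have hM := NN_posDef hX hY
  set M := matPow X (1/2) * Y * matPow X (1/2) with hMd
  have hN : NN X Y s = rtr (matPow M s) := rfl
  have hm : 0 < rtr (matPow M s) := rtr_pos (matPow_posDef hM s)
  have hx : 0 < rtr (matPow X v) := rtr_pos (matPow_posDef hX v)
  have hy : 0 < rtr (matPow Y u) := rtr_pos (matPow_posDef hY u)
  suffices h : rtr (matPow M s) ^ (1/s) ≤ rtr (matPow X v) ^ (1/v) * rtr (matPow Y u) ^ (1/u) by
    have h2 := Real.rpow_le_rpow (by positivity) h hs.le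
    rw [Real.mul_rpow (by positivity) (by positivity), ← Real.rpow_mul hm.le, ← Real.rpow_mul hx.le,
      ← Real.rpow_mul hy.le, one_div_mul_cancel hs.ne', Real.rpow_one] at h2
    rw [hN]
    convert h2 using 3 <;> ring
  rcases le_or_gt s 1 with hs1 | hs1
  · have h1 := holder2_rev hM (dens_posDef hX v) (dens_rtr hX v) hs hs1
    refine h1.trans ?_
    rw [dens_pow hX, Matrix.mul_smul, rtr_smul]
    have h2 := holder2 hY (dens_posDef hX v) (dens_rtr hX v) hu
    rw [dens_pow hX, Matrix.mul_smul, rtr_smul] at h2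
    have e : rtr (M * matPow X (v * (1 - 1/s))) = rtr (Y * matPow X (v * (1 - 1/u))) := by
      rw [hMd, show matPow X (1/2) * Y * matPow X (1/2) * matPow X (v * (1 - 1/s)) =
        matPow X (1/2) * (Y * (matPow X (1/2) * matPow X (v * (1 - 1/s)))) by
          simp only [Matrix.mul_assoc], rtr_mul_comm, Matrix.mul_assoc, matPow_mul hX, matPow_mul hX]
      congr 3
      rw [huv]; field_simp; ring
    rw [e]
    have h3 : rtr (matPow X v) ^ (-(1 - 1/s)) = rtr (matPow X v) ^ (1/v) * rtr (matPow X v) ^ (-(1 - 1/u)) := by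
      rw [← Real.rpow_add hx]; congr 1; rw [huv]; ring
    rw [h3, mul_assoc]
    gcongr
  · rw [← holder_eq hM hs.ne']
    have hc : 0 ≤ 1 - 1/s := by
      rw [sub_nonneg, div_le_one hs]; exact hs1.le
    have h1 := three_holder (dens_posDef hX v) (dens_posDef hY u) (dens_posDef hM s)
      (dens_rtr hX v) (dens_rtr hY u) (dens_rtr hM s) (a := 1/v) (b := 1/u) (c := 1 - 1/s)
      (by positivity) (by positivity) hc (by rw [huv]; ring)
    rw [dens_pow hX, dens_pow hY] at h1
    simp only [Matrix.mul_smul, Matrix.smul_mul, rtr_smul] at h1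
    rw [show v * (1/v/2) = 1/2 by field_simp, show u * (1/u) = 1 by field_simp, matPow_one hY, ← hMd] at h1
    have e2 : rtr (matPow X v) ^ (1/v) * rtr (matPow Y u) ^ (1/u) *
      (rtr (matPow X v) ^ (-(1/v/2)) * (rtr (matPow Y u) ^ (-(1/u)) * (rtr (matPow X v) ^ (-(1/v/2)) *
      rtr (M * matPow (dens M s) (1 - 1/s))))) = rtr (M * matPow (dens M s) (1 - 1/s)) := by
      have a1 : rtr (matPow X v) ^ (1/v) * rtr (matPow X v) ^ (-(1/v/2)) * rtr (matPow X v) ^ (-(1/v/2)) = 1 := by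
        rw [← Real.rpow_add hx, ← Real.rpow_add hx]; ring_nf; simp
      have a2 : rtr (matPow Y u) ^ (1/u) * rtr (matPow Y u) ^ (-(1/u)) = 1 := by
        rw [← Real.rpow_add hy]; simp
      linear_combination (rtr (M * matPow (dens M s) (1 - 1/s))) *
        ((rtr (matPow Y u) ^ (1/u) * rtr (matPow Y u) ^ (-(1/u))) * a1 + a2)
    rw [← e2]
    apply mul_le_of_le_one_right (by positivity)
    linarith

lemma split_le {P X Z : Matrix n n ℂ} (hP : P.PosDef) (hX : X.PosDef) (hZ : Z.PosDef)
    {s u v : ℝ} (hs : 0 < s) (hu : 1 ≤ u) (hv : 0 < v) (huv : 1/s = 1/u + 1/v) :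
    NN P X s ≤ NN P Z v ^ (s/v) * NN (matPow Z (-1)) X u ^ (s/u) := by
  set X' := matPow Z (1/2) * P * matPow Z (1/2) with hX'
  set Y' := matPow Z (-(1/2)) * X * matPow Z (-(1/2)) with hY'
  have hX'p : X'.PosDef := NN_posDef hZ hP
  have hY'p : Y'.PosDef := by
    have := posDef_conj hX (matPow_isUnit hZ (-(1/2)))
    rwa [matPow_herm hZ] at this
  have e0 : matPow (matPow Z (-1)) (1/2) = matPow Z (-(1/2)) := by
    rw [matPow_matPow hZ]; congr 1; ring
  have e1 : NN (matPow Z (-1)) X u = rtr (matPow Y' u) := by rw [NN, e0]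
  have e2 : NN P Z v = rtr (matPow X' v) := by rw [NN_symm hP hZ]; rfl
  have hG : IsUnit (matPow Z (1/2) * matPow Y' (1/2)) := (matPow_isUnit hZ _).mul (matPow_isUnit hY'p _)
  have e3 : NN P X s = NN X' Y' s := by
    rw [NN_flip hP hG, NN_symm hX'p hY'p, NN]
    · rw [Matrix.conjTranspose_mul, matPow_herm hZ, matPow_herm hY'p, hX']
      simp only [Matrix.mul_assoc]
    · rw [Matrix.conjTranspose_mul, matPow_herm hZ, matPow_herm hY'p]
      calc X = (matPow Z (1/2) * matPow Z (-(1/2))) * X * (matPow Z (-(1/2)) * matPow Z (1/2)) := by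
            rw [matPow_inv hZ, matPow_inv' hZ]; simp
        _ = matPow Z (1/2) * Y' * matPow Z (1/2) := by rw [hY']; simp only [Matrix.mul_assoc]
        _ = matPow Z (1/2) * (matPow Y' (1/2) * matPow Y' (1/2)) * matPow Z (1/2) := by
            rw [half_mul_half hY'p]
        _ = _ := by simp only [Matrix.mul_assoc]
  rw [e3, e1, e2]
  exact holder3 hX'p hY'p hs hu hv huv

lemma split_eq {P X : Matrix n n ℂ} (hP : P.PosDef) (hX : X.PosDef) 
    {s u v : ℝ} (hs : 0 < s) (hu : 0 < u) (hv : 0 < v) (huv : 1/s = 1/u + 1/v) :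
    ∃ Z : Matrix n n ℂ, Z.PosDef ∧
      NN P X s = NN P Z v ^ (s/v) * NN (matPow Z (-1)) X u ^ (s/u) := by
  have hD : (matPow X (1/2) * P * matPow X (1/2)).PosDef := NN_posDef hX hP
  have hNN : NN P X s = rtr (matPow (matPow X (1/2) * P * matPow X (1/2)) s) := by
    rw [NN_symm hP hX]; rfl
  set D := matPow X (1/2) * P * matPow X (1/2) with hDd
  have huv2 : s / v + s / u = 1 := by
    have : s * (1/s) = 1 := by field_simp
    rw [huv] at this; linarith [show s * (1/u + 1/v) = s/v + s/u by ring]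
  set Z := matPow X (1/2) * matPow D (-(s/u)) * matPow X (1/2) with hZd
  have hZ : Z.PosDef := NN_posDef hX (matPow_posDef hD _)
  have hZi : matPow Z (-1) = matPow X (-(1/2)) * matPow D (s/u) * matPow X (-(1/2)) := by
    have h1 : Z * (matPow X (-(1/2)) * matPow D (s/u) * matPow X (-(1/2))) = 1 := by
      rw [hZd]
      calc _ = matPow X (1/2) * matPow D (-(s/u)) * (matPow X (1/2) * matPow X (-(1/2))) * matPow D (s/u) * matPow X (-(1/2)) := by
            simp only [Matrix.mul_assoc]
        _ = matPow X (1/2) * (matPow D (-(s/u)) * matPow D (s/u)) * matPow X (-(1/2)) := by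
            rw [matPow_inv hX]; simp only [Matrix.mul_assoc, Matrix.one_mul]
        _ = 1 := by rw [matPow_inv' hD, Matrix.mul_one, matPow_inv hX]
    have h2 : matPow Z (-1) * Z = 1 := by
      nth_rewrite 2 [← matPow_one hZ]; exact matPow_inv' hZ 1
    calc matPow Z (-1) = matPow Z (-1) * (Z * (matPow X (-(1/2)) * matPow D (s/u) * matPow X (-(1/2)))) := by
          rw [h1, Matrix.mul_one]
      _ = _ := by rw [← Matrix.mul_assoc, h2, Matrix.one_mul]
  refine ⟨Z, hZ, ?_⟩
  have e1 : NN (matPow Z (-1)) X u = rtr (matPow D s) := by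
    rw [NN_symm (matPow_posDef hZ _) hX, NN, hZi]
    rw [show matPow X (1/2) * (matPow X (-(1/2)) * matPow D (s/u) * matPow X (-(1/2))) * matPow X (1/2)
      = (matPow X (1/2) * matPow X (-(1/2))) * matPow D (s/u) * (matPow X (-(1/2)) * matPow X (1/2)) by
        simp only [Matrix.mul_assoc], matPow_inv hX, matPow_inv' hX, Matrix.one_mul, Matrix.mul_one,
      matPow_matPow hD, div_mul_cancel₀ _ hu.ne']
  have e2 : NN P Z v = rtr (matPow D s) := by
    rw [NN_flip hP (G := matPow X (1/2) * matPow D (-(s/u)/2)) ((matPow_isUnit hX _).mul (matPow_isUnit hD _))]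
    · rw [Matrix.conjTranspose_mul, matPow_herm hX, matPow_herm hD]
      rw [show matPow D (-(s/u)/2) * matPow X (1/2) * P * (matPow X (1/2) * matPow D (-(s/u)/2)) =
        matPow D (-(s/u)/2) * (D * matPow D (-(s/u)/2)) by rw [hDd]; simp only [Matrix.mul_assoc]]
      rw [matPow_mul_self hD, matPow_mul hD, matPow_matPow hD]
      congr 2
      rw [show -(s/u)/2 + (1 + -(s/u)/2) = 1 - s/u by ring, show 1 - s/u = s/v by linarith]
      field_simp
    · rw [Matrix.conjTranspose_mul, matPow_herm hX, matPow_herm hD, hZd]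
      rw [show matPow X (1/2) * matPow D (-(s/u)/2) * (matPow D (-(s/u)/2) * matPow X (1/2)) =
        matPow X (1/2) * (matPow D (-(s/u)/2) * matPow D (-(s/u)/2)) * matPow X (1/2) by
          simp only [Matrix.mul_assoc], matPow_mul hD, add_halves]
  rw [e1, e2, hNN]
  rcases isEmpty_or_nonempty n with hn | hn
  · have h2 : rtr (matPow D s) = 0 := by simp [rtr, Matrix.trace]
    rw [h2, Real.zero_rpow (by positivity), zero_mul]
  · rw [← Real.rpow_add (rtr_pos (matPow_posDef hD s)), huv2, Real.rpow_one]

end holder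

section lieb
open Real Set MeasureTheory
variable {n m k : Type*} [Fintype n] [DecidableEq n] [Fintype m] [DecidableEq m]
  [Fintype k] [DecidableEq k]

lemma par_scalar {a b t : ℝ} (ha : 0 < a) (hb : 0 < b) (ht : 0 < t) (v x : ℂ) :
    (1/t) * (a * Complex.normSq x) + b * Complex.normSq (v - x) =
      a * b / (a + t * b) * Complex.normSq v +
      (a + t * b) / t * Complex.normSq (x - ((t * b / (a + t * b) : ℝ) : ℂ) * v) := by
  have : a + t * b ≠ 0 := by positivity
  simp only [Complex.normSq_apply, Complex.sub_re, Complex.sub_im, Complex.mul_re, Complex.mul_im,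
    Complex.ofReal_re, Complex.ofReal_im]
  field_simp
  ring

lemma two_spec' {M : Matrix n n ℂ} {W : Matrix m m ℂ} (hM : M.PosDef) (hW : W.PosDef)
    (V : Matrix n m ℂ) :
    ∃ (μ : n → ℝ) (w : m → ℝ) (d : n → m → ℝ), (∀ i, 0 < μ i) ∧ (∀ j, 0 < w j) ∧
      (∀ i j, 0 ≤ d i j) ∧ (∀ s t : ℝ, rtr (matPow M s * V * matPow W t * Vᴴ) =
        ∑ i, ∑ j, μ i ^ s * w j ^ t * d i j) ∧
      ∀ t : ℝ, 0 < t → (∀ X : Matrix n m ℂ, ∑ i, ∑ j, μ i * w j / (μ i + t * w j) * d i j ≤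
          (1/t) * rtr (M * X * Xᴴ) + rtr ((V - X) * W * (V - X)ᴴ)) ∧
        ∃ X : Matrix n m ℂ, (1/t) * rtr (M * X * Xᴴ) + rtr ((V - X) * W * (V - X)ᴴ) =
          ∑ i, ∑ j, μ i * w j / (μ i + t * w j) * d i j := by
  obtain ⟨U, a, hU, ha, rfl⟩ := posDef_spec hM
  obtain ⟨Y, b, hY, hb, rfl⟩ := posDef_spec hW
  have hU2 := unitary_of_left hU
  have hY2 := unitary_of_left hY
  refine ⟨a, b, fun i j => Complex.normSq ((Uᴴ * V * Y) i j), ha, hb,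
    fun i j => Complex.normSq_nonneg _, fun s t => ?_, fun t ht => ?_⟩
  · rw [matPow_rdiag hU ha, matPow_rdiag hY hb, rtr_double]
  have one1 : (1 : Matrix n n ℂ) = U * rdiag (fun _ => (1:ℝ)) * Uᴴ := by simp [rdiag, hU2]
  have one2 : (1 : Matrix m m ℂ) = Y * rdiag (fun _ => (1:ℝ)) * Yᴴ := by simp [rdiag, hY2]
  have key : ∀ X : Matrix n m ℂ, (1/t) * rtr (U * rdiag a * Uᴴ * X * Xᴴ) +
      rtr ((V - X) * (Y * rdiag b * Yᴴ) * (V - X)ᴴ) =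
      ∑ i, ∑ j, a i * b j / (a i + t * b j) * Complex.normSq ((Uᴴ * V * Y) i j) +
      ∑ i, ∑ j, (a i + t * b j) / t * Complex.normSq ((Uᴴ * X * Y) i j -
        ((t * b j / (a i + t * b j) : ℝ) : ℂ) * (Uᴴ * V * Y) i j) := by
    intro X
    have e1 : rtr (U * rdiag a * Uᴴ * X * Xᴴ) =
        ∑ i, ∑ j, a i * 1 * Complex.normSq ((Uᴴ * X * Y) i j) := by
      rw [← rtr_double, ← one2, Matrix.mul_one]
    have e2 : rtr ((V - X) * (Y * rdiag b * Yᴴ) * (V - X)ᴴ) =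
        ∑ i, ∑ j, 1 * b j * Complex.normSq ((Uᴴ * (V - X) * Y) i j) := by
      rw [← rtr_double, ← one1, Matrix.one_mul]
    rw [e1, e2]
    simp only [Finset.mul_sum, ← Finset.sum_add_distrib]
    refine Finset.sum_congr rfl fun i _ => Finset.sum_congr rfl fun j _ => ?_
    rw [← par_scalar (ha i) (hb j) ht]
    simp only [Matrix.mul_sub, Matrix.sub_mul, Matrix.sub_apply, mul_one, one_mul]
  refine ⟨fun X => ?_, ?_⟩
  · rw [key X, le_add_iff_nonneg_right]
    refine Finset.sum_nonneg fun i _ => Finset.sum_nonneg fun j _ => ?_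
    have := ha i; have := hb j
    exact mul_nonneg (by positivity) (Complex.normSq_nonneg _)
  · refine ⟨U * (Matrix.of fun i j => ((t * b j / (a i + t * b j) : ℝ) : ℂ) * (Uᴴ * V * Y) i j) * Yᴴ, ?_⟩
    rw [key]
    rw [add_eq_left]
    refine Finset.sum_eq_zero fun i _ => Finset.sum_eq_zero fun j _ => ?_
    have : ∀ Z : Matrix n m ℂ, Uᴴ * (U * Z * Yᴴ) * Y = Z := by
      intro Z
      rw [show Uᴴ * (U * Z * Yᴴ) * Y = (Uᴴ * U) * Z * (Yᴴ * Y) by simp only [Matrix.mul_assoc], hU, hY]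
      simp
    rw [this]; simp

lemma scalar_int {p : ℝ} (hp : p ∈ Ioo (0:ℝ) 1) {a r : ℝ} (ha : 0 < a) (hr : 0 < r) :
    IntegrableOn (fun t : ℝ => t ^ (p - 1) * (a * r / (a + t * r))) (Ioi 0) ∧
    a ^ p * r ^ (1 - p) = (∫ t in Ioi 0, rpowIntegrand₀₁ p t 1)⁻¹ *
      ∫ t in Ioi (0:ℝ), t ^ (p - 1) * (a * r / (a + t * r)) := by
  have hx : 0 < a / r := div_pos ha hr
  have h1 := integrableOn_rpowIntegrand₀₁_Ioi hp hx.le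
  have h2 := rpow_eq_const_mul_integral hp hx.le
  have e : EqOn (fun t => r * rpowIntegrand₀₁ p t (a/r))
      (fun t : ℝ => t ^ (p - 1) * (a * r / (a + t * r))) (Ioi 0) := by
    intro t ht
    have ht : 0 < t := ht
    simp only []
    rw [rpowIntegrand₀₁_eq_pow_div hp ht.le hx.le]
    field_simp
    ring
  constructor
  · exact IntegrableOn.congr_fun (h1.const_mul r) e measurableSet_Ioi
  · rw [← setIntegral_congr_fun measurableSet_Ioi e, integral_const_mul]
    rw [Real.div_rpow ha.le hr.le] at h2
    rw [Real.rpow_sub hr, Real.rpow_one, show a ^ p * (r / r ^ p) = r * (a ^ p / r ^ p) by ring, h2]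
    ring

lemma dsum_int {p : ℝ} (hp : p ∈ Ioo (0:ℝ) 1) {μ : n → ℝ} {w : m → ℝ} (hμ : ∀ i, 0 < μ i)
    (hw : ∀ j, 0 < w j) (d : n → m → ℝ) :
    IntegrableOn (fun t : ℝ => t ^ (p - 1) * ∑ i, ∑ j, μ i * w j / (μ i + t * w j) * d i j) (Ioi 0) ∧
    ∑ i, ∑ j, μ i ^ p * w j ^ (1 - p) * d i j = (∫ t in Ioi 0, rpowIntegrand₀₁ p t 1)⁻¹ *
      ∫ t in Ioi (0:ℝ), t ^ (p - 1) * ∑ i, ∑ j, μ i * w j / (μ i + t * w j) * d i j := by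
  have e : (fun t : ℝ => t ^ (p - 1) * ∑ i, ∑ j, μ i * w j / (μ i + t * w j) * d i j) =
    fun t : ℝ => ∑ i, ∑ j, t ^ (p - 1) * (μ i * w j / (μ i + t * w j)) * d i j := by
    funext t; simp only [Finset.mul_sum, mul_assoc]
  have hI : ∀ i j, IntegrableOn (fun t : ℝ => t ^ (p - 1) * (μ i * w j / (μ i + t * w j)) * d i j) (Ioi 0) :=
    fun i j => (scalar_int hp (hμ i) (hw j)).1.mul_const _
  rw [e]
  constructor
  · exact integrable_finset_sum _ fun i _ => integrable_finset_sum _ fun j _ => hI i j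
  · rw [integral_finset_sum _ fun i _ => integrable_finset_sum _ fun j _ => hI i j, Finset.mul_sum]
    refine Finset.sum_congr rfl fun i _ => ?_
    rw [integral_finset_sum _ fun j _ => hI i j, Finset.mul_sum]
    refine Finset.sum_congr rfl fun j _ => ?_
    rw [integral_mul_const, (scalar_int hp (hμ i) (hw j)).2, mul_assoc]

lemma rtr_mix_le {A A0 A1 : Matrix n n ℂ} {t0 t1 : ℝ}
    (h : (A - ((t0 : ℂ) • A0 + (t1 : ℂ) • A1)).PosSemidef) (X : Matrix n m ℂ) :
    t0 * rtr (A0 * X * Xᴴ) + t1 * rtr (A1 * X * Xᴴ) ≤ rtr (A * X * Xᴴ) := by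
  have h1 := rtr_nonneg (h.conjTranspose_mul_mul_same X)
  rw [Matrix.mul_assoc, rtr_mul_comm, Matrix.sub_mul, Matrix.add_mul, Matrix.smul_mul, Matrix.smul_mul,
    Matrix.sub_mul, Matrix.add_mul, Matrix.smul_mul, Matrix.smul_mul, rtr_sub, rtr_add, rtr_smul, rtr_smul] at h1
  linarith

lemma rtr_mix_le' {A A0 A1 : Matrix n n ℂ} {t0 t1 : ℝ}
    (h : (A - ((t0 : ℂ) • A0 + (t1 : ℂ) • A1)).PosSemidef) (X : Matrix m n ℂ) :
    t0 * rtr (X * A0 * Xᴴ) + t1 * rtr (X * A1 * Xᴴ) ≤ rtr (X * A * Xᴴ) := by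
  have := rtr_mix_le h Xᴴ
  have e : ∀ B : Matrix n n ℂ, rtr (B * Xᴴ * Xᴴᴴ) = rtr (X * B * Xᴴ) := by
    intro B; rw [Matrix.conjTranspose_conjTranspose, rtr_mul_comm, Matrix.mul_assoc]
  simpa only [e] using this

/-- Lieb concavity, degree one -/
lemma lieb0 {A A0 A1 : Matrix n n ℂ} {S S0 S1 : Matrix m m ℂ} (hA : A.PosDef) (hA0 : A0.PosDef)
    (hA1 : A1.PosDef) (hS : S.PosDef) (hS0 : S0.PosDef) (hS1 : S1.PosDef) {t0 t1 : ℝ}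
    (ht0 : 0 ≤ t0) (ht1 : 0 ≤ t1)
    (h : (A - ((t0 : ℂ) • A0 + (t1 : ℂ) • A1)).PosSemidef)
    (h' : (S - ((t0 : ℂ) • S0 + (t1 : ℂ) • S1)).PosSemidef) (V : Matrix n m ℂ) {p : ℝ}
    (hp0 : 0 < p) (hp1 : p < 1) :
    t0 * rtr (matPow A0 p * V * matPow S0 (1 - p) * Vᴴ) +
      t1 * rtr (matPow A1 p * V * matPow S1 (1 - p) * Vᴴ) ≤
      rtr (matPow A p * V * matPow S (1 - p) * Vᴴ) := by
  have hp : p ∈ Ioo (0:ℝ) 1 := ⟨hp0, hp1⟩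
  obtain ⟨μ, w, d, hμ, hw, hd, H, G⟩ := two_spec' hA hS V
  obtain ⟨μ0, w0, d0, hμ0, hw0, hd0, H0, G0⟩ := two_spec' hA0 hS0 V
  obtain ⟨μ1, w1, d1, hμ1, hw1, hd1, H1, G1⟩ := two_spec' hA1 hS1 V
  rw [H, H0, H1, (dsum_int hp hμ hw d).2, (dsum_int hp hμ0 hw0 d0).2, (dsum_int hp hμ1 hw1 d1).2]
  have i0 := (dsum_int hp hμ0 hw0 d0).1
  have i1 := (dsum_int hp hμ1 hw1 d1).1
  have hc : 0 < (∫ t in Ioi 0, rpowIntegrand₀₁ p t 1)⁻¹ := inv_pos.mpr (integral_rpowIntegrand₀₁_one_pos hp)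
  set c := (∫ t in Ioi 0, rpowIntegrand₀₁ p t 1)⁻¹
  have key : t0 * (∫ t in Ioi (0:ℝ), t ^ (p - 1) * ∑ i, ∑ j, μ0 i * w0 j / (μ0 i + t * w0 j) * d0 i j) +
      t1 * (∫ t in Ioi (0:ℝ), t ^ (p - 1) * ∑ i, ∑ j, μ1 i * w1 j / (μ1 i + t * w1 j) * d1 i j) ≤
      ∫ t in Ioi (0:ℝ), t ^ (p - 1) * ∑ i, ∑ j, μ i * w j / (μ i + t * w j) * d i j := by
    rw [← integral_const_mul, ← integral_const_mul, ← integral_add (i0.const_mul t0) (i1.const_mul t1)]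
    refine setIntegral_mono_on ((i0.const_mul t0).add (i1.const_mul t1)) (dsum_int hp hμ hw d).1
      measurableSet_Ioi fun t ht => ?_
    have ht : 0 < t := ht
    obtain ⟨X, hX⟩ := (G t ht).2
    have a0 := (G0 t ht).1 X
    have a1 := (G1 t ht).1 X
    rw [← hX]
    have b0 := rtr_mix_le h X
    have b1 := rtr_mix_le' h' (V - X)
    have hpw : 0 < t ^ (p - 1) := Real.rpow_pos_of_pos ht _
    have ht' : 0 < 1/t := by positivity
    have b0' := mul_le_mul_of_nonneg_left b0 ht'.le
    have a0' := mul_le_mul_of_nonneg_left a0 ht0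
    have a1' := mul_le_mul_of_nonneg_left a1 ht1
    refine le_trans (le_of_eq ?_) (mul_le_mul_of_nonneg_left (b := t0 * (∑ i, ∑ j, μ0 i * w0 j / (μ0 i + t * w0 j) * d0 i j) + t1 * (∑ i, ∑ j, μ1 i * w1 j / (μ1 i + t * w1 j) * d1 i j)) ?_ hpw.le)
    · ring
    · linarith
  have := mul_le_mul_of_nonneg_left key hc.le
  linarith

lemma psd_of_rtr {M : Matrix n n ℂ} (hM : M.IsHermitian)
    (h : ∀ X : Matrix n Unit ℂ, 0 ≤ rtr (M * X * Xᴴ)) : M.PosSemidef := by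
  refine Matrix.PosSemidef.of_dotProduct_mulVec_nonneg hM fun x => ?_
  have h1 := h (Matrix.replicateCol Unit x)
  have e : Matrix.trace (M * Matrix.replicateCol Unit x * (Matrix.replicateCol Unit x)ᴴ) = star x ⬝ᵥ (M *ᵥ x) := by
    rw [Matrix.trace_mul_comm]
    simp [Matrix.trace, Matrix.mul_apply, dotProduct, Matrix.mulVec]
  rw [rtr, e] at h1
  rw [Complex.le_def]
  refine ⟨h1, ?_⟩
  exact (hM.im_star_dotProduct_mulVec_self x).symm

lemma mix_herm {A B : Matrix n n ℂ} (hA : A.IsHermitian) (hB : B.IsHermitian) (a b : ℝ) :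
    ((a : ℂ) • A + (b : ℂ) • B).IsHermitian := by
  rw [Matrix.IsHermitian, Matrix.conjTranspose_add, Matrix.conjTranspose_smul, Matrix.conjTranspose_smul,
    hA.eq, hB.eq]; simp

/-- operator concavity of powers -/
lemma conc {A A0 A1 : Matrix n n ℂ} (hA : A.PosDef) (hA0 : A0.PosDef)
    (hA1 : A1.PosDef) {t0 t1 : ℝ} (ht0 : 0 ≤ t0) (ht1 : 0 ≤ t1) (ht : t0 + t1 = 1)
    (h : (A - ((t0 : ℂ) • A0 + (t1 : ℂ) • A1)).PosSemidef) {p : ℝ} (hp0 : 0 ≤ p) (hp1 : p ≤ 1) :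
    (matPow A p - ((t0 : ℂ) • matPow A0 p + (t1 : ℂ) • matPow A1 p)).PosSemidef := by
  have one : (1 - ((t0 : ℂ) • (1 : Matrix n n ℂ) + (t1 : ℂ) • (1 : Matrix n n ℂ))).PosSemidef := by
    rw [← add_smul, ← Complex.ofReal_add, ht]; simp [Matrix.PosSemidef.zero]
  rcases hp0.eq_or_lt with rfl | hp0
  · rw [matPow_zero hA, matPow_zero hA0, matPow_zero hA1]; exact one
  rcases hp1.eq_or_lt with rfl | hp1
  · rw [matPow_one hA, matPow_one hA0, matPow_one hA1]; exact h
  refine psd_of_rtr ((matPow_posDef hA p).1.sub (mix_herm (matPow_posDef hA0 p).1 (matPow_posDef hA1 p).1 _ _))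
    fun X => ?_
  have o : (1 : Matrix Unit Unit ℂ).PosDef := Matrix.PosDef.one
  have one' : (1 - ((t0 : ℂ) • (1 : Matrix Unit Unit ℂ) + (t1 : ℂ) • (1 : Matrix Unit Unit ℂ))).PosSemidef := by
    rw [← add_smul, ← Complex.ofReal_add, ht]; simp [Matrix.PosSemidef.zero]
  have o1 : ∀ x : ℝ, matPow (1 : Matrix Unit Unit ℂ) x = 1 := by
    intro x
    have := matPow_matPow o 0 x
    rwa [matPow_zero o, zero_mul, matPow_zero o] at this
  have := lieb0 hA hA0 hA1 o o o ht0 ht1 h one' X hp0 hp1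
  simp only [o1, Matrix.mul_one] at this
  simp only [Matrix.sub_mul, Matrix.add_mul, Matrix.smul_mul, rtr_sub, rtr_add, rtr_smul]
  linarith

lemma lieb {A A0 A1 : Matrix n n ℂ} {S S0 S1 : Matrix m m ℂ} (hA : A.PosDef) (hA0 : A0.PosDef)
    (hA1 : A1.PosDef) (hS : S.PosDef) (hS0 : S0.PosDef) (hS1 : S1.PosDef) {t0 t1 : ℝ}
    (ht0 : 0 ≤ t0) (ht1 : 0 ≤ t1) (ht : t0 + t1 = 1)
    (h : (A - ((t0 : ℂ) • A0 + (t1 : ℂ) • A1)).PosSemidef)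
    (h' : (S - ((t0 : ℂ) • S0 + (t1 : ℂ) • S1)).PosSemidef) (V : Matrix n m ℂ) {p q : ℝ}
    (hp0 : 0 ≤ p) (hq0 : 0 ≤ q) (hpq : p + q ≤ 1) :
    t0 * rtr (matPow A0 p * V * matPow S0 q * Vᴴ) +
      t1 * rtr (matPow A1 p * V * matPow S1 q * Vᴴ) ≤
      rtr (matPow A p * V * matPow S q * Vᴴ) := by
  rcases hp0.eq_or_lt with rfl | hp0
  · rw [matPow_zero hA, matPow_zero hA0, matPow_zero hA1]
    simp only [Matrix.one_mul]
    exact rtr_mix_le' (conc hS hS0 hS1 ht0 ht1 ht h' hq0 (by linarith)) V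
  rcases hq0.eq_or_lt with rfl | hq0
  · rw [matPow_zero hS, matPow_zero hS0, matPow_zero hS1]
    simp only [Matrix.mul_one]
    exact rtr_mix_le (conc hA hA0 hA1 ht0 ht1 ht h hp0.le (by linarith)) V
  have hp1 : p < 1 := by linarith
  have hp1' : 0 < 1 - p := by linarith
  have c := conc hS hS0 hS1 ht0 ht1 ht h' (p := q / (1 - p)) (by positivity)
    (by rw [div_le_one hp1']; linarith)
  have := lieb0 hA hA0 hA1 (matPow_posDef hS _) (matPow_posDef hS0 _) (matPow_posDef hS1 _)
    ht0 ht1 h c V hp0 hp1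
  rwa [matPow_matPow hS, matPow_matPow hS0, matPow_matPow hS1, div_mul_cancel₀ _ hp1'.ne'] at this

lemma inv_var {D h X : Matrix n n ℂ} (hD : D.PosDef) (hh : hᴴ = h) :
    2 * rtr (h * X) - rtr (D * X * Xᴴ) ≤ rtr (matPow D (-1) * (h * h)) := by
  set Y := matPow D (-(1/2)) * h - matPow D (1/2) * X with hY
  have h0 := rtr_nonneg (Matrix.posSemidef_conjTranspose_mul_self Y)
  have e : Yᴴ * Y = h * matPow D (-1) * h - h * X - Xᴴ * h + Xᴴ * D * X := by
    have a1 : matPow D (-(1/2)) * matPow D (-(1/2)) = matPow D (-1) := by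
      rw [matPow_mul hD]; norm_num
    rw [hY, Matrix.conjTranspose_sub, Matrix.conjTranspose_mul, Matrix.conjTranspose_mul, matPow_herm hD,
      matPow_herm hD, hh, Matrix.sub_mul, Matrix.mul_sub, Matrix.mul_sub]
    rw [show h * matPow D (-(1/2)) * (matPow D (-(1/2)) * h) = h * (matPow D (-(1/2)) * matPow D (-(1/2))) * h by
        simp only [Matrix.mul_assoc],
      show h * matPow D (-(1/2)) * (matPow D (1/2) * X) = h * (matPow D (-(1/2)) * matPow D (1/2)) * X by
        simp only [Matrix.mul_assoc],
      show Xᴴ * matPow D (1/2) * (matPow D (-(1/2)) * h) = Xᴴ * (matPow D (1/2) * matPow D (-(1/2))) * h by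
        simp only [Matrix.mul_assoc],
      show Xᴴ * matPow D (1/2) * (matPow D (1/2) * X) = Xᴴ * (matPow D (1/2) * matPow D (1/2)) * X by
        simp only [Matrix.mul_assoc], a1, matPow_inv hD, matPow_inv' hD, half_mul_half hD]
    simp only [Matrix.mul_one]; abel
  rw [e, rtr_add, rtr_sub, rtr_sub] at h0
  have e1 : rtr (Xᴴ * h) = rtr (h * X) := by
    have : Xᴴ * h = (h * X)ᴴ := by rw [Matrix.conjTranspose_mul, hh]
    rw [this, rtr, Matrix.trace_conjTranspose, rtr]; simp
  have e2 : rtr (Xᴴ * D * X) = rtr (D * X * Xᴴ) := by rw [Matrix.mul_assoc, rtr_mul_comm]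
  have e3 : rtr (h * matPow D (-1) * h) = rtr (matPow D (-1) * (h * h)) := by
    rw [Matrix.mul_assoc, rtr_mul_comm, Matrix.mul_assoc]
  linarith

/-- convexity of negative powers -/
lemma conv_neg {A A0 A1 H : Matrix n n ℂ} (hA : A.PosDef) (hA0 : A0.PosDef)
    (hA1 : A1.PosDef) (hH : H.PosDef) {t0 t1 : ℝ} (ht0 : 0 ≤ t0) (ht1 : 0 ≤ t1) (ht : t0 + t1 = 1)
    (h : (A - ((t0 : ℂ) • A0 + (t1 : ℂ) • A1)).PosSemidef) {r : ℝ} (hr0 : -1 ≤ r) (hr1 : r ≤ 0) :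
    rtr (matPow A r * H) ≤ t0 * rtr (matPow A0 r * H) + t1 * rtr (matPow A1 r * H) := by
  have c := conc hA hA0 hA1 ht0 ht1 ht h (p := -r) (by linarith) (by linarith)
  have e : ∀ {B : Matrix n n ℂ}, B.PosDef → matPow B r = matPow (matPow B (-r)) (-1) := by
    intro B hB; rw [matPow_matPow hB]; congr 1; ring
  rw [e hA, e hA0, e hA1]
  have hD := matPow_posDef hA (-r)
  have hD0 := matPow_posDef hA0 (-r)
  have hD1 := matPow_posDef hA1 (-r)
  set D := matPow A (-r)
  set D0 := matPow A0 (-r)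
  set D1 := matPow A1 (-r)
  set g := matPow H (1/2) with hg
  have hgg : g * g = H := half_mul_half hH
  have hgh : gᴴ = g := matPow_herm hH _
  set X := matPow D (-1) * g with hX
  have a0 := inv_var (X := X) hD0 hgh
  have a1 := inv_var (X := X) hD1 hgh
  have b := rtr_mix_le c X
  have hDi : D * matPow D (-1) = 1 := by
    nth_rewrite 1 [← matPow_one hD]; exact matPow_inv hD 1
  have e1 : rtr (g * X) = rtr (matPow D (-1) * H) := by
    rw [hX, rtr_mul_comm, Matrix.mul_assoc, hgg]
  have e2 : rtr (D * X * Xᴴ) = rtr (matPow D (-1) * H) := by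
    rw [hX, ← Matrix.mul_assoc, hDi, Matrix.one_mul, Matrix.conjTranspose_mul, matPow_herm hD, hgh,
      ← Matrix.mul_assoc, hgg, rtr_mul_comm]
  rw [hgg] at a0 a1
  rw [e1] at a0 a1
  rw [e2] at b
  have c0 := mul_le_mul_of_nonneg_left a0 ht0
  have c1 := mul_le_mul_of_nonneg_left a1 ht1
  have ht' : t1 = 1 - t0 := by linarith
  subst ht'
  linarith

end lieb

section epstein
variable {n m ι : Type*} [Fintype n] [DecidableEq n] [Fintype m] [DecidableEq m]
  [Fintype ι]

/-- completely positive map -/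
noncomputable def cp (V : ι → Matrix n m ℂ) (X : Matrix n n ℂ) : Matrix m m ℂ :=
  ∑ i, (V i)ᴴ * X * V i

lemma rtr_cp (V : ι → Matrix n m ℂ) (X : Matrix n n ℂ) (R : Matrix m m ℂ) :
    rtr (cp V X * R) = ∑ i, rtr (X * V i * R * (V i)ᴴ) := by
  rw [cp, Finset.sum_mul, rtr_sum]
  refine Finset.sum_congr rfl fun i _ => ?_
  rw [Matrix.mul_assoc, Matrix.mul_assoc, rtr_mul_comm]
  simp only [Matrix.mul_assoc]

lemma amgm_root {T x0 x1 v t0 t1 : ℝ} (hT : 0 < T) (h0 : 0 < x0) (h1 : 0 < x1) (hv : 0 < v)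
    (ht0 : 0 ≤ t0) (ht1 : 0 ≤ t1) (ht : t0 + t1 = 1)
    (h : t0 * x0 ^ (1/v) + t1 * x1 ^ (1/v) ≤ T ^ (1/v)) : x0 ^ t0 * x1 ^ t1 ≤ T := by
  have := Real.geom_mean_le_arith_mean2_weighted ht0 ht1 (Real.rpow_pos_of_pos h0 (1/v)).le
    (Real.rpow_pos_of_pos h1 (1/v)).le ht
  have h2 := Real.rpow_le_rpow (by positivity) (this.trans h) hv.le
  rw [← Real.rpow_mul hT.le, one_div_mul_cancel hv.ne', Real.rpow_one, ← Real.rpow_mul h0.le,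
    ← Real.rpow_mul h1.le, Real.mul_rpow (by positivity) (by positivity), ← Real.rpow_mul h0.le,
    ← Real.rpow_mul h1.le, show 1/v * t0 * v = t0 by field_simp, show 1/v * t1 * v = t1 by field_simp] at h2
  exact h2

lemma epstein [Nonempty m] (V : ι → Matrix n m ℂ) {A A0 A1 : Matrix n n ℂ} (hA : A.PosDef) (hA0 : A0.PosDef)
    (hA1 : A1.PosDef) {t0 t1 : ℝ} (ht0 : 0 ≤ t0) (ht1 : 0 ≤ t1) (ht : t0 + t1 = 1)
    (h : (A - ((t0 : ℂ) • A0 + (t1 : ℂ) • A1)).PosSemidef) {p v : ℝ} (hp0 : 0 ≤ p) (hp1 : p ≤ 1)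
    (hv : 0 < v) (hvp : v * p ≤ 1)
    (hM : (cp V (matPow A p)).PosDef) (hM0 : (cp V (matPow A0 p)).PosDef)
    (hM1 : (cp V (matPow A1 p)).PosDef) :
    rtr (matPow (cp V (matPow A0 p)) v) ^ t0 * rtr (matPow (cp V (matPow A1 p)) v) ^ t1 ≤
      rtr (matPow (cp V (matPow A p)) v) := by
  refine amgm_root (rtr_pos (matPow_posDef hM v)) (rtr_pos (matPow_posDef hM0 v))
    (rtr_pos (matPow_posDef hM1 v)) hv ht0 ht1 ht ?_
  rcases le_or_gt v 1 with hv1 | hv1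
  · have hR := dens_posDef hM v
    rw [← holder_eq hM hv.ne']
    have b0 := holder2_rev hM0 hR (dens_rtr hM v) hv hv1
    have b1 := holder2_rev hM1 hR (dens_rtr hM v) hv hv1
    have hc : t0 * rtr (cp V (matPow A0 p) * matPow (dens (cp V (matPow A p)) v) (1 - 1/v)) +
      t1 * rtr (cp V (matPow A1 p) * matPow (dens (cp V (matPow A p)) v) (1 - 1/v)) ≤
      rtr (cp V (matPow A p) * matPow (dens (cp V (matPow A p)) v) (1 - 1/v)) := by
      set R := dens (cp V (matPow A p)) v
      rw [rtr_cp, rtr_cp, rtr_cp, Finset.mul_sum, Finset.mul_sum, ← Finset.sum_add_distrib]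
      refine Finset.sum_le_sum fun i _ => ?_
      have := rtr_mix_le (conc hA hA0 hA1 ht0 ht1 ht h hp0 hp1) (V i * matPow R ((1 - 1/v)/2))
      have e : ∀ B : Matrix n n ℂ, rtr (B * (V i * matPow R ((1 - 1/v)/2)) * (V i * matPow R ((1 - 1/v)/2))ᴴ) =
          rtr (B * V i * matPow R (1 - 1/v) * (V i)ᴴ) := by
        intro B
        rw [Matrix.conjTranspose_mul, matPow_herm hR, ← add_halves (1 - 1/v), ← matPow_mul hR, add_halves]
        simp only [Matrix.mul_assoc]
      simpa only [e] using this
    nlinarith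
  · have hR0 := dens_posDef hM0 v
    have hR1 := dens_posDef hM1 v
    set R0 := dens (cp V (matPow A0 p)) v with hR0d
    set R1 := dens (cp V (matPow A1 p)) v with hR1d
    set R := (t0 : ℂ) • R0 + (t1 : ℂ) • R1 with hRd
    have hR : R.PosDef := by
      rcases ht0.eq_or_lt with h' | h'
      · have : t1 = 1 := by linarith
        rw [hRd, ← h', this]; simpa using hR1
      · exact (posDef_smul hR0 h').add_posSemidef (hR1.posSemidef.smul (by exact_mod_cast ht1))
    have hR1' : rtr R = 1 := by
      rw [hRd, rtr_add, rtr_smul, rtr_smul, hR0d, hR1d, dens_rtr hM0, dens_rtr hM1]; linarith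
    refine le_trans ?_ (holder2 hM hR hR1' hv1.le)
    rw [← holder_eq hM0 hv.ne', ← holder_eq hM1 hv.ne', ← hR0d, ← hR1d]
    rw [rtr_cp, rtr_cp, rtr_cp, Finset.mul_sum, Finset.mul_sum, ← Finset.sum_add_distrib]
    refine Finset.sum_le_sum fun i _ => ?_
    refine lieb hA hA0 hA1 hR hR0 hR1 ht0 ht1 ht h (by rw [← hRd, sub_self]; exact Matrix.PosSemidef.zero) (V i) hp0 ?_ ?_
    · rw [sub_nonneg, div_le_one hv]; exact hv1.le
    · have : p ≤ 1/v := by rw [le_div_iff₀ hv]; linarith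
      linarith

end epstein

section jfun
variable {n m : Type*} [Fintype n] [DecidableEq n] [Fintype m] [DecidableEq m]

lemma mix_posDef {A0 A1 : Matrix n n ℂ} (hA0 : A0.PosDef) (hA1 : A1.PosDef) {t0 t1 : ℝ}
    (ht0 : 0 ≤ t0) (ht1 : 0 ≤ t1) (ht : t0 + t1 = 1) :
    ((t0 : ℂ) • A0 + (t1 : ℂ) • A1).PosDef := by
  rcases ht0.eq_or_lt with h' | h'
  · have : t1 = 1 := by linarith
    rw [← h', this]; simpa using hA1
  · exact (posDef_smul hA0 h').add_posSemidef (hA1.posSemidef.smul (by exact_mod_cast ht1))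

lemma comb {a b a0 b0 a1 b1 x0 x1 α β t0 t1 : ℝ} (ha0 : 0 < a0) (hb0 : 0 < b0) (ha1 : 0 < a1)
    (hb1 : 0 < b1) (hx0 : 0 ≤ x0) (hx1 : 0 ≤ x1) (hα : 0 ≤ α) (hβ : 0 ≤ β) (ht0 : 0 ≤ t0) (ht1 : 0 ≤ t1)
    (h0 : x0 ≤ a0 ^ α * b0 ^ β) (h1 : x1 ≤ a1 ^ α * b1 ^ β)
    (ha : a0 ^ t0 * a1 ^ t1 ≤ a) (hb : b0 ^ t0 * b1 ^ t1 ≤ b) :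
    x0 ^ t0 * x1 ^ t1 ≤ a ^ α * b ^ β := by
  have e : (a0 ^ α * b0 ^ β) ^ t0 * (a1 ^ α * b1 ^ β) ^ t1 = (a0 ^ t0 * a1 ^ t1) ^ α * (b0 ^ t0 * b1 ^ t1) ^ β := by
    rw [Real.mul_rpow (by positivity) (by positivity), Real.mul_rpow (by positivity) (by positivity),
      Real.mul_rpow (by positivity) (by positivity), Real.mul_rpow (by positivity) (by positivity)]
    simp only [← Real.rpow_mul ha0.le, ← Real.rpow_mul hb0.le, ← Real.rpow_mul ha1.le, ← Real.rpow_mul hb1.le]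
    rw [mul_comm t0 α, mul_comm t0 β, mul_comm t1 α, mul_comm t1 β]
    ring
  have ha' : 0 ≤ a := le_trans (by positivity) ha
  have hb' : 0 ≤ b := le_trans (by positivity) hb
  calc x0 ^ t0 * x1 ^ t1 ≤ (a0 ^ α * b0 ^ β) ^ t0 * (a1 ^ α * b1 ^ β) ^ t1 := by gcongr
    _ = _ := e
    _ ≤ _ := by gcongr

lemma NN_conc [Nonempty n] {Z A A0 A1 : Matrix n n ℂ} (hZ : Z.PosDef) (hA : A.PosDef) (hA0 : A0.PosDef)
    (hA1 : A1.PosDef) {t0 t1 : ℝ} (ht0 : 0 ≤ t0) (ht1 : 0 ≤ t1) (ht : t0 + t1 = 1)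
    (h : (A - ((t0 : ℂ) • A0 + (t1 : ℂ) • A1)).PosSemidef) {p v : ℝ} (hp0 : 0 ≤ p) (hp1 : p ≤ 1)
    (hv : 0 < v) (hvp : v * p ≤ 1) :
    NN (matPow A0 p) Z v ^ t0 * NN (matPow A1 p) Z v ^ t1 ≤ NN (matPow A p) Z v := by
  have e : ∀ B : Matrix n n ℂ, cp (fun _ : Unit => matPow Z (1/2)) B =
      matPow Z (1/2) * B * matPow Z (1/2) := by
    intro B; simp [cp, matPow_herm hZ]
  have hp : ∀ B : Matrix n n ℂ, B.PosDef → (cp (fun _ : Unit => matPow Z (1/2)) (matPow B p)).PosDef := by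
    intro B hB; rw [e]; exact NN_posDef hZ (matPow_posDef hB p)
  have := epstein (fun _ : Unit => matPow Z (1/2)) hA hA0 hA1 ht0 ht1 ht h hp0 hp1 hv hvp
    (hp _ hA) (hp _ hA0) (hp _ hA1)
  rw [e, e, e] at this
  rw [NN_symm (matPow_posDef hA p) hZ, NN_symm (matPow_posDef hA0 p) hZ, NN_symm (matPow_posDef hA1 p) hZ]
  exact this

/-- the embedding `x ↦ e_i ⊗ x` -/
noncomputable def emb (n m : Type*) [DecidableEq n] [DecidableEq m] (i : n) : Matrix (n × m) m ℂ :=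
  Matrix.of fun x j => if x = (i, j) then 1 else 0

lemma emb_iso (i : n) : (emb n m i)ᴴ * emb n m i = 1 := by
  ext a b
  simp only [emb, Matrix.mul_apply, Matrix.conjTranspose_apply, Matrix.of_apply, Matrix.one_apply]
  rw [Finset.sum_eq_single (i, a)]
  · simp
  · intro x _ hx; simp [hx]
  · simp

lemma emb_sum (Y : Matrix m m ℂ) : ∑ i, emb n m i * Y * (emb n m i)ᴴ = (1 : Matrix n n ℂ) ⊗ₖ Y := by
  ext ⟨a, b⟩ ⟨c, d⟩
  rw [Matrix.sum_apply]
  have : ∀ i, (emb n m i * Y * (emb n m i)ᴴ) (a, b) (c, d) = if a = i ∧ c = i then Y b d else 0 := by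
    intro i
    simp only [emb, Matrix.mul_apply, Matrix.conjTranspose_apply, Matrix.of_apply, Prod.mk.injEq]
    by_cases h1 : a = i <;> by_cases h2 : c = i <;> simp [h1, h2]
  simp only [this, Matrix.kroneckerMap_apply, Matrix.one_apply]
  by_cases h : a = c
  · subst h; simp
  · simp only [h, if_false, zero_mul]
    refine Finset.sum_eq_zero fun i _ => ?_
    rw [if_neg]; rintro ⟨h1, h2⟩; exact h (h1.trans h2.symm)

/-- column blocks -/
noncomputable def blk (G : Matrix (n × m) (n × m) ℂ) (i : n) : Matrix (n × m) m ℂ := G * emb n m i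

lemma blk_posDef [Nonempty n] {G : Matrix (n × m) (n × m) ℂ} (hG : IsUnit G) {P : Matrix (n × m) (n × m) ℂ}
    (hP : P.PosDef) : (cp (blk G) P).PosDef := by
  have hi : ∀ i, ((blk G i)ᴴ * P * blk G i).PosDef := by
    intro i
    have h1 := posDef_conj' hP hG
    have : (blk G i)ᴴ * P * blk G i = (emb n m i)ᴴ * (Gᴴ * P * G) * emb n m i := by
      rw [blk, Matrix.conjTranspose_mul]; simp only [Matrix.mul_assoc]
    rw [this]
    refine h1.conjTranspose_mul_mul_same ?_
    intro x y hxy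
    have := congrArg (fun z => (emb n m i)ᴴ *ᵥ z) hxy
    simpa [Matrix.mulVec_mulVec, emb_iso] using this
  obtain ⟨i0⟩ := ‹Nonempty n›
  rw [cp, ← Finset.add_sum_erase _ _ (Finset.mem_univ i0)]
  exact (hi i0).add_posSemidef (Matrix.posSemidef_sum _ fun i _ => (hi i).posSemidef)

lemma blk_sum (G : Matrix (n × m) (n × m) ℂ) (Y : Matrix m m ℂ) :
    G * ((1 : Matrix n n ℂ) ⊗ₖ Y) * Gᴴ = ∑ i, blk G i * Y * (blk G i)ᴴ := by
  rw [← emb_sum, Finset.mul_sum, Finset.sum_mul]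
  refine Finset.sum_congr rfl fun i _ => ?_
  rw [blk, Matrix.conjTranspose_mul]; simp only [Matrix.mul_assoc]

lemma rtr_blk (G P : Matrix (n × m) (n × m) ℂ) (Y : Matrix m m ℂ) :
    rtr (G * ((1 : Matrix n n ℂ) ⊗ₖ Y) * Gᴴ * P) = rtr (cp (blk G) P * Y) := by
  rw [blk_sum, rtr_cp, Finset.sum_mul, rtr_sum]
  refine Finset.sum_congr rfl fun i _ => ?_
  rw [rtr_mul_comm]; simp only [Matrix.mul_assoc]

lemma psd_sub_self (A : Matrix n n ℂ) : (A - A).PosSemidef := by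
  rw [sub_self]; exact Matrix.PosSemidef.zero

/-- joint log-concavity of `J` -/
lemma J_conc [Nonempty n] [Nonempty m] {G : Matrix (n × m) (n × m) ℂ} (hG : IsUnit G)
    {B0 B1 : Matrix m m ℂ} {W0 W1 : Matrix (n × m) (n × m) ℂ} (hB0 : B0.PosDef) (hB1 : B1.PosDef)
    (hW0 : W0.PosDef) (hW1 : W1.PosDef) {t0 t1 : ℝ} (ht0 : 0 ≤ t0) (ht1 : 0 ≤ t1) (ht : t0 + t1 = 1)
    {q r γ : ℝ} (hq0 : 0 < q) (hq1 : q ≤ 1) (hr1 : r < 0) (hqr : 0 < q + r) (hγ0 : 0 ≤ γ)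
    (hγ1 : γ ≤ 1 - (q + r)) :
    NN (matPow B0 q) (cp (blk G) (matPow W0 γ)) (1/(1-r)) ^ t0 *
      NN (matPow B1 q) (cp (blk G) (matPow W1 γ)) (1/(1-r)) ^ t1 ≤
    NN (matPow ((t0 : ℂ) • B0 + (t1 : ℂ) • B1) q)
      (cp (blk G) (matPow ((t0 : ℂ) • W0 + (t1 : ℂ) • W1) γ)) (1/(1-r)) := by
  have hB := mix_posDef hB0 hB1 ht0 ht1 ht
  have hW := mix_posDef hW0 hW1 ht0 ht1 ht
  set B := (t0 : ℂ) • B0 + (t1 : ℂ) • B1 with hBd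
  set W := (t0 : ℂ) • W0 + (t1 : ℂ) • W1 with hWd
  have hX : ∀ {W : Matrix (n × m) (n × m) ℂ}, W.PosDef → (cp (blk G) (matPow W γ)).PosDef :=
    fun hW => blk_posDef hG (matPow_posDef hW γ)
  have hr' : 0 < 1 - r := by linarith
  have hd : 0 < 1 - r - q := by linarith
  have huv : 1/(1/(1-r)) = 1/(1/(1-r-q)) + 1/(1/q) := by simp
  obtain ⟨Z, hZ, e⟩ := split_eq (matPow_posDef hB q) (hX hW) (s := 1/(1-r)) (u := 1/(1-r-q)) (v := 1/q)
    (by positivity) (by positivity) (by positivity) huv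
  have hu1 : 1 ≤ 1/(1-r-q) := by rw [le_div_iff₀ hd]; linarith
  have s0 := split_le (matPow_posDef hB0 q) (hX hW0) hZ (s := 1/(1-r)) (u := 1/(1-r-q)) (v := 1/q)
    (by positivity) hu1 (by positivity) huv
  have s1 := split_le (matPow_posDef hB1 q) (hX hW1) hZ (s := 1/(1-r)) (u := 1/(1-r-q)) (v := 1/q)
    (by positivity) hu1 (by positivity) huv
  rw [e]
  have hZi := matPow_posDef hZ (-1)
  have c1 := NN_conc hZ hB hB0 hB1 ht0 ht1 ht (by rw [← hBd]; exact psd_sub_self _) hq0.le hq1 (v := 1/q)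
    (by positivity) (by rw [one_div_mul_cancel hq0.ne'])
  have hz0 : matPow (matPow Z (-1)) (1/2) = matPow Z (-(1/2)) := by
    rw [matPow_matPow hZ]; congr 1; ring
  have ecp : ∀ P : Matrix (n × m) (n × m) ℂ, cp (fun i => blk G i * matPow Z (-(1/2))) P =
      matPow (matPow Z (-1)) (1/2) * cp (blk G) P * matPow (matPow Z (-1)) (1/2) := by
    intro P
    rw [hz0, cp, cp, Finset.mul_sum, Finset.sum_mul]
    refine Finset.sum_congr rfl fun i _ => ?_
    rw [Matrix.conjTranspose_mul, matPow_herm hZ]; simp only [Matrix.mul_assoc]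
  have hcp : ∀ {W : Matrix (n × m) (n × m) ℂ}, W.PosDef →
      (cp (fun i => blk G i * matPow Z (-(1/2))) (matPow W γ)).PosDef := by
    intro W hW; rw [ecp]; exact NN_posDef hZi (hX hW)
  have c2 := epstein (fun i => blk G i * matPow Z (-(1/2))) hW hW0 hW1 ht0 ht1 ht
    (by rw [← hWd]; exact psd_sub_self _) (p := γ) (v := 1/(1-r-q)) hγ0 (by linarith)
    (by positivity) (by rw [div_mul_eq_mul_div, one_mul, div_le_one hd]; linarith) (hcp hW) (hcp hW0) (hcp hW1)
  rw [ecp, ecp, ecp] at c2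
  exact comb (NN_pos (matPow_posDef hB0 q) hZ _) (NN_pos hZi (hX hW0) _)
    (NN_pos (matPow_posDef hB1 q) hZ _) (NN_pos hZi (hX hW1) _)
    (NN_pos (matPow_posDef hB0 q) (hX hW0) _).le (NN_pos (matPow_posDef hB1 q) (hX hW1) _).le
    (by positivity) (by positivity) ht0 ht1 s0 s1 c1 c2

end jfun

section cont
variable {n : Type*} [Fintype n] [DecidableEq n]

open scoped Matrix.Norms.L2Operator in
lemma matPow_contOn_aux (t : ℝ) : ContinuousOn (fun A : Matrix n n ℂ => matPow A t) {A | A.PosDef} := by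
  have h1 : ContinuousOn (fun A : Matrix n n ℂ => cfc (fun x : ℝ => if 0 < x then x ^ t else 0) A)
      {A | A.PosDef} := by
    refine ContinuousOn.cfc_of_mem_nhdsSet (s := Set.Ioi (0:ℝ)) _ ?_ continuousOn_id ?_ ?_
    · rw [isOpen_Ioi.mem_nhdsSet]
      simp only [Set.iUnion_subset_iff]
      intro A hA x hx
      have hA : A.PosDef := hA
      change x ∈ spectrum ℝ A at hx
      rw [hA.1.spectrum_real_eq_range_eigenvalues] at hx
      obtain ⟨i, rfl⟩ := hx
      exact hA.eigenvalues_pos i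
    · intro A hA; exact hA.1.isSelfAdjoint
    · have : ContinuousOn (fun x : ℝ => x ^ t) (Set.Ioi 0) := fun x hx =>
        (Real.continuousAt_rpow_const x t (Or.inl (ne_of_gt hx))).continuousWithinAt
      refine this.congr fun x hx => ?_
      have hx : 0 < x := hx
      simp [hx]
  refine h1.congr fun A hA => ?_
  have hA : A.PosDef := hA
  show matPow A t = cfc _ A
  rw [hA.1.cfc_eq, matPow, dif_pos hA.1, Matrix.IsHermitian.cfc]
  rfl

lemma matPow_contOn (t : ℝ) : ContinuousOn (fun A : Matrix n n ℂ => matPow A t) {A | A.PosDef} :=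
  matPow_contOn_aux t

lemma matPow_cont_comp {X : Type*} [TopologicalSpace X] {f : X → Matrix n n ℂ} {s : Set X}
    (hf : ContinuousOn f s) (h : ∀ x ∈ s, (f x).PosDef) (t : ℝ) :
    ContinuousOn (fun x => matPow (f x) t) s :=
  (matPow_contOn t).comp hf h

lemma rtr_cont : Continuous (fun A : Matrix n n ℂ => rtr A) := by
  unfold rtr
  exact Complex.continuous_re.comp (Continuous.matrix_trace continuous_id)

end cont

section minimax
variable {n m : Type*} [Fintype n] [DecidableEq n] [Fintype m] [DecidableEq m]

lemma psd_rdiag {U : Matrix n n ℂ} {a : n → ℝ} (ha : ∀ i, 0 ≤ a i) :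
    (U * rdiag a * Uᴴ).PosSemidef := by
  have : (rdiag a).PosSemidef := by
    unfold rdiag
    exact Matrix.PosSemidef.diagonal (fun i => by simpa using ha i)
  exact this.mul_mul_conjTranspose_same U

lemma spec_sub {U : Matrix n n ℂ} (hU : Uᴴ * U = 1) (a : n → ℝ) (δ : ℝ) :
    U * rdiag a * Uᴴ - (δ : ℂ) • (1 : Matrix n n ℂ) = U * rdiag (fun i => a i - δ) * Uᴴ := by
  have h2 := unitary_of_left hU
  have : rdiag (fun i => a i - δ) = rdiag a - (δ : ℂ) • (1 : Matrix n n ℂ) := by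
    ext i j
    by_cases h : i = j
    · subst h; simp [rdiag]
    · simp [rdiag, h]
  rw [this, Matrix.mul_sub, Matrix.sub_mul]
  simp [h2]

lemma posDef_lower [Nonempty n] {H : Matrix n n ℂ} (hH : H.PosDef) :
    ∃ h : ℝ, 0 < h ∧ (H - (h : ℂ) • (1 : Matrix n n ℂ)).PosSemidef := by
  obtain ⟨U, a, hU, ha, rfl⟩ := posDef_spec hH
  obtain ⟨i, hi⟩ := Finite.exists_min a
  refine ⟨a i, ha i, ?_⟩
  rw [spec_sub hU]
  exact psd_rdiag fun j => sub_nonneg.mpr (hi j)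

lemma posDef_of_lower {C : Matrix n n ℂ} {δ : ℝ} (hδ : 0 < δ)
    (h : (C - (δ : ℂ) • (1 : Matrix n n ℂ)).PosSemidef) : C.PosDef := by
  have h1 : ((δ : ℂ) • (1 : Matrix n n ℂ)).PosDef := posDef_smul Matrix.PosDef.one hδ
  have := h1.add_posSemidef h
  rwa [add_sub_cancel] at this

lemma entry_le {C : Matrix n n ℂ} (hC : C.PosDef) (h1 : rtr C = 1) (i j : n) : ‖C i j‖ ≤ 1 := by
  have e1 : rtr (C * Cᴴ) = ∑ i, ∑ j, Complex.normSq (C i j) := by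
    simp only [rtr, Matrix.trace, Matrix.diag_apply, Matrix.mul_apply, Matrix.conjTranspose_apply,
      Complex.re_sum]
    refine Finset.sum_congr rfl fun i _ => Finset.sum_congr rfl fun j _ => ?_
    simp [Complex.normSq_apply]
  have e2 : rtr (C * Cᴴ) ≤ 1 := by
    rw [hC.1.eq]
    obtain ⟨U, a, hU, ha, rfl⟩ := posDef_spec hC
    rw [rtr_rdiag hU] at h1
    rw [show U * rdiag a * Uᴴ * (U * rdiag a * Uᴴ) = U * (rdiag a * (Uᴴ * U) * rdiag a) * Uᴴ by
      simp only [Matrix.mul_assoc], hU, Matrix.mul_one, rdiag_mul, rtr_rdiag hU, ← h1]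
    refine Finset.sum_le_sum fun i _ => ?_
    have : a i ≤ 1 := by
      rw [← h1]; exact Finset.single_le_sum (fun j _ => (ha j).le) (Finset.mem_univ i)
    have := ha i
    nlinarith
  have e3 : Complex.normSq (C i j) ≤ ∑ i, ∑ j, Complex.normSq (C i j) := by
    refine le_trans ?_ (Finset.single_le_sum (f := fun i => ∑ j, Complex.normSq (C i j))
      (fun i _ => Finset.sum_nonneg fun j _ => Complex.normSq_nonneg _) (Finset.mem_univ i))
    exact Finset.single_le_sum (f := fun j => Complex.normSq (C i j))
      (fun j _ => Complex.normSq_nonneg _) (Finset.mem_univ j)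
  have : ‖C i j‖ ^ 2 ≤ 1 := by
    rw [← Complex.normSq_eq_norm_sq]; linarith
  exact (sq_le_one_iff₀ (norm_nonneg _)).mp this

lemma compact_set {δ : ℝ} (hδ : 0 < δ) :
    IsCompact {C : Matrix n n ℂ | (C - (δ : ℂ) • (1 : Matrix n n ℂ)).PosSemidef ∧ rtr C = 1} := by
  have hcpt : IsCompact (Set.univ.pi fun _ : n => Set.univ.pi fun _ : n => Metric.closedBall (0:ℂ) 1) :=
    isCompact_univ_pi fun _ => isCompact_univ_pi fun _ => isCompact_closedBall _ _
  have hcl : IsClosed {C : Matrix n n ℂ | (C - (δ : ℂ) • (1 : Matrix n n ℂ)).PosSemidef ∧ rtr C = 1} := by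
    have e : {C : Matrix n n ℂ | (C - (δ : ℂ) • (1 : Matrix n n ℂ)).PosSemidef ∧ rtr C = 1} =
      ({C : Matrix n n ℂ | (C - (δ : ℂ) • (1 : Matrix n n ℂ))ᴴ = C - (δ : ℂ) • (1 : Matrix n n ℂ)} ∩
      ⋂ X : Matrix n Unit ℂ, {C | 0 ≤ rtr ((C - (δ : ℂ) • (1 : Matrix n n ℂ)) * X * Xᴴ)}) ∩
      {C | rtr C = 1} := by
      ext C
      simp only [Set.mem_setOf_eq, Set.mem_inter_iff, Set.mem_iInter]
      refine and_congr_left fun _ => ⟨fun h => ⟨h.1, fun X => ?_⟩, fun h => psd_of_rtr h.1 h.2⟩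
      have := rtr_nonneg (h.conjTranspose_mul_mul_same X)
      rwa [Matrix.mul_assoc, rtr_mul_comm] at this
    rw [e]
    have c0 : Continuous fun C : Matrix n n ℂ => C - (δ : ℂ) • (1 : Matrix n n ℂ) :=
      continuous_id.sub continuous_const
    refine ((isClosed_eq c0.matrix_conjTranspose c0).inter (isClosed_iInter fun X => ?_)).inter
      (isClosed_eq rtr_cont continuous_const)
    exact isClosed_le continuous_const (rtr_cont.comp
      ((c0.matrix_mul continuous_const).matrix_mul continuous_const))
  refine hcpt.of_isClosed_subset hcl fun C hC i _ j _ => ?_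
  rw [mem_closedBall_zero_iff]
  exact entry_le (posDef_of_lower hδ hC.1) hC.2 i j

/-- the inner matrix -/
noncomputable def MM (G : Matrix (n × m) (n × m) ℂ) (P C : Matrix m m ℂ) (r : ℝ) :
    Matrix (n × m) (n × m) ℂ :=
  G * ((1 : Matrix n n ℂ) ⊗ₖ (matPow P (1/2) * matPow C r * matPow P (1/2))) * Gᴴ

lemma MM_posDef {G : Matrix (n × m) (n × m) ℂ} (hG : IsUnit G) {P C : Matrix m m ℂ} (hP : P.PosDef)
    (hC : C.PosDef) (r : ℝ) : (MM G P C r).PosDef :=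
  posDef_conj (Matrix.PosDef.one.kronecker (NN_posDef hP (matPow_posDef hC r))) hG

lemma rtr_MM (G Q : Matrix (n × m) (n × m) ℂ) (P C : Matrix m m ℂ) (r : ℝ) :
    rtr (MM G P C r * Q) = rtr (matPow C r * (matPow P (1/2) * cp (blk G) Q * matPow P (1/2))) := by
  rw [MM, rtr_blk, rtr_mul_comm]
  rw [show matPow P (1/2) * matPow C r * matPow P (1/2) * cp (blk G) Q =
    matPow P (1/2) * (matPow C r * matPow P (1/2) * cp (blk G) Q) by simp only [Matrix.mul_assoc],
    rtr_mul_comm]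
  simp only [Matrix.mul_assoc]

lemma MM_contOn (G : Matrix (n × m) (n × m) ℂ) (P : Matrix m m ℂ) (r : ℝ) {X : Type*} [TopologicalSpace X]
    {f : X → Matrix m m ℂ} {s : Set X} (hf : ContinuousOn f s) (h : ∀ x ∈ s, (f x).PosDef) :
    ContinuousOn (fun x => MM G P (f x) r) s := by
  simp only [MM, blk_sum]
  refine continuousOn_finsetSum _ fun i _ => ?_
  have h0 := matPow_cont_comp hf h r
  have hφ : Continuous fun Y : Matrix m m ℂ => blk G i * (matPow P (1/2) * Y * matPow P (1/2)) * (blk G i)ᴴ :=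
    (continuous_const.matrix_mul ((continuous_const.matrix_mul continuous_id).matrix_mul
      continuous_const)).matrix_mul continuous_const
  exact hφ.comp_continuousOn h0

/-- weak duality -/
lemma weak_dual [Nonempty n] {G : Matrix (n × m) (n × m) ℂ} (hG : IsUnit G) {P C : Matrix m m ℂ}
    {W : Matrix (n × m) (n × m) ℂ}
    (hP : P.PosDef) (hC : C.PosDef) (hC1 : rtr C = 1) (hW : W.PosDef) (hW1 : rtr W = 1) {u r : ℝ}
    (hu : 1 ≤ u) (hr : r < 0) :
    NN P (cp (blk G) (matPow W (1 - 1/u))) (1/(1-r)) ^ (1-r) ≤ rtr (matPow (MM G P C r) u) ^ (1/u) := by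
  have hr' : 0 < 1 - r := by linarith
  refine le_trans ?_ (holder2 (MM_posDef hG hP hC r) hW hW1 hu)
  have := holder2_rev (NN_posDef hP (blk_posDef hG (matPow_posDef hW (1 - 1/u)))) hC hC1 (u := 1/(1-r))
    (by positivity) (by rw [div_le_one hr']; linarith)
  rw [rtr_MM, rtr_mul_comm]
  rw [one_div_one_div, show 1 - (1 - r) = r by ring] at this
  exact this

lemma exists_min [Nonempty n] [Nonempty m] {G : Matrix (n × m) (n × m) ℂ} (hG : IsUnit G) {P : Matrix m m ℂ}
    (hP : P.PosDef) {u r : ℝ} (hu : 1 ≤ u) (hr : r < 0) :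
    ∃ C0 : Matrix m m ℂ, C0.PosDef ∧ rtr C0 = 1 ∧ ∀ C : Matrix m m ℂ, C.PosDef → rtr C = 1 →
      rtr (matPow (MM G P C0 r) u) ≤ rtr (matPow (MM G P C r) u) := by
  have hu0 : 0 < u := by linarith
  have hbp : (dens (1 : Matrix m m ℂ) 1).PosDef := dens_posDef Matrix.PosDef.one 1
  have hb1 : rtr (dens (1 : Matrix m m ℂ) 1) = 1 := dens_rtr Matrix.PosDef.one 1
  set Cb := dens (1 : Matrix m m ℂ) 1
  have hwp : (dens (1 : Matrix (n × m) (n × m) ℂ) 1).PosDef := dens_posDef Matrix.PosDef.one 1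
  have hw1 : rtr (dens (1 : Matrix (n × m) (n × m) ℂ) 1) = 1 := dens_rtr Matrix.PosDef.one 1
  set Wb := dens (1 : Matrix (n × m) (n × m) ℂ) 1
  have hHp := NN_posDef hP (blk_posDef hG (matPow_posDef hwp (1 - 1/u)))
  set H := matPow P (1/2) * cp (blk G) (matPow Wb (1 - 1/u)) * matPow P (1/2)
  obtain ⟨h, hh, hH⟩ := posDef_lower hHp
  have hgb : 0 < rtr (matPow (MM G P Cb r) u) := rtr_pos (matPow_posDef (MM_posDef hG hP hbp r) u)
  set L := rtr (matPow (MM G P Cb r) u) ^ (1/u) / h with hL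
  have hL0 : 0 < L := by positivity
  set δ := L ^ (1/r) with hδd
  have hδ : 0 < δ := Real.rpow_pos_of_pos hL0 _
  have coer : ∀ C : Matrix m m ℂ, C.PosDef → rtr C = 1 →
      rtr (matPow (MM G P C r) u) ≤ rtr (matPow (MM G P Cb r) u) →
      (C - (δ : ℂ) • (1 : Matrix m m ℂ)).PosSemidef := by
    intro C hC hC1 hle
    have a1 := holder2 (MM_posDef hG hP hC r) hwp hw1 hu
    rw [rtr_MM] at a1
    have a2 : rtr (matPow C r * H) ≤ rtr (matPow (MM G P Cb r) u) ^ (1/u) :=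
      a1.trans (Real.rpow_le_rpow (rtr_pos (matPow_posDef (MM_posDef hG hP hC r) u)).le hle (by positivity))
    have a3 := rtr_mul_nonneg hH (matPow_posDef hC r)
    rw [Matrix.sub_mul, rtr_sub, Matrix.smul_mul, rtr_smul, Matrix.one_mul, rtr_mul_comm H] at a3
    have a4 : rtr (matPow C r) ≤ L := by
      rw [hL, le_div_iff₀ hh]; linarith
    obtain ⟨U, a, hU, ha, rfl⟩ := posDef_spec hC
    rw [matPow_rdiag hU ha, rtr_rdiag hU] at a4
    rw [spec_sub hU]
    refine psd_rdiag fun i => sub_nonneg.mpr ?_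
    have a5 : a i ^ r ≤ L :=
      (Finset.single_le_sum (f := fun i => a i ^ r) (fun j _ => (Real.rpow_pos_of_pos (ha j) r).le)
        (Finset.mem_univ i)).trans a4
    have a6 := Real.rpow_le_rpow_of_nonpos (Real.rpow_pos_of_pos (ha i) r) a5
      (show 1/r ≤ 0 from (one_div_neg.mpr hr).le)
    rwa [← Real.rpow_mul (ha i).le, mul_one_div_cancel hr.ne, Real.rpow_one] at a6
  set K := {C : Matrix m m ℂ | (C - (δ : ℂ) • (1 : Matrix m m ℂ)).PosSemidef ∧ rtr C = 1}
  have hK : IsCompact K := compact_set hδ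
  have hKne : K.Nonempty := ⟨Cb, coer Cb hbp hb1 le_rfl, hb1⟩
  have hKp : ∀ C ∈ K, C.PosDef := fun C hC => posDef_of_lower hδ hC.1
  have hcont : ContinuousOn (fun C => rtr (matPow (MM G P C r) u)) K :=
    rtr_cont.comp_continuousOn (matPow_cont_comp (MM_contOn G P r continuousOn_id hKp)
      (fun C hC => MM_posDef hG hP (hKp C hC) r) u)
  obtain ⟨C0, hC0, hmin⟩ := hK.exists_isMinOn hKne hcont
  refine ⟨C0, hKp C0 hC0, hC0.2, fun C hC hC1 => ?_⟩
  rcases le_or_gt (rtr (matPow (MM G P C r) u)) (rtr (matPow (MM G P Cb r) u)) with hle | hgt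
  · exact hmin (show C ∈ K from ⟨coer C hC hC1 hle, hC1⟩)
  · exact (hmin (show Cb ∈ K from ⟨coer Cb hbp hb1 le_rfl, hb1⟩)).trans hgt.le

lemma strong_dual [Nonempty n] [Nonempty m] {G : Matrix (n × m) (n × m) ℂ} (hG : IsUnit G) {P : Matrix m m ℂ}
    (hP : P.PosDef) {u r : ℝ} (hu : 1 ≤ u) (hr0 : -1 ≤ r) (hr : r < 0) :
    ∃ C0 : Matrix m m ℂ, C0.PosDef ∧ rtr C0 = 1 ∧ ∃ W0 : Matrix (n × m) (n × m) ℂ, W0.PosDef ∧ rtr W0 = 1 ∧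
      rtr (matPow (MM G P C0 r) u) ^ (1/u) ≤ NN P (cp (blk G) (matPow W0 (1 - 1/u))) (1/(1-r)) ^ (1-r) := by
  have hu0 : 0 < u := by linarith
  have hr' : 0 < 1 - r := by linarith
  obtain ⟨C0, hC0, hC01, hmin⟩ := exists_min hG hP hu hr
  have hM0 := MM_posDef hG hP hC0 r
  have hW0 := dens_posDef hM0 u
  refine ⟨C0, hC0, hC01, dens (MM G P C0 r) u, hW0, dens_rtr hM0 u, ?_⟩
  have hHp := NN_posDef hP (blk_posDef hG (matPow_posDef hW0 (1 - 1/u)))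
  have hC1 := dens_posDef hHp (1/(1-r))
  have hC11 := dens_rtr hHp (1/(1-r))
  have hfin := holder_eq hHp (u := 1/(1-r)) (by positivity)
  rw [one_div_one_div, show 1 - (1 - r) = r by ring] at hfin
  have : NN P (cp (blk G) (matPow (dens (MM G P C0 r) u) (1 - 1/u))) (1/(1-r)) =
    rtr (matPow (matPow P (1/2) * cp (blk G) (matPow (dens (MM G P C0 r) u) (1 - 1/u)) * matPow P (1/2)) (1/(1-r))) := rfl
  rw [this, ← hfin, rtr_mul_comm, ← rtr_MM, ← holder_eq hM0 hu0.ne']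
  set C1 := dens (matPow P (1/2) * cp (blk G) (matPow (dens (MM G P C0 r) u) (1 - 1/u)) * matPow P (1/2)) (1/(1-r))
  clear_value C1
  clear hfin this
  -- path
  set F : ℝ → Matrix m m ℂ := fun ε => ((1 - ε : ℝ) : ℂ) • C0 + (ε : ℂ) • C1 with hF
  have hFp : ∀ ε ∈ Set.Icc (0:ℝ) 1, (F ε).PosDef := fun ε hε =>
    mix_posDef hC0 hC1 (by linarith [hε.2]) hε.1 (by ring)
  have hF1 : ∀ ε, rtr (F ε) = 1 := by
    intro ε; simp only [hF]; rw [rtr_add, rtr_smul, rtr_smul, hC01, hC11]; ring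
  have hFc : Continuous F := by
    simp only [hF]
    exact ((Complex.continuous_ofReal.comp (continuous_const.sub continuous_id)).smul continuous_const).add
      ((Complex.continuous_ofReal).smul continuous_const)
  have hF0 : F 0 = C0 := by simp [hF]
  have hMp : ∀ ε ∈ Set.Icc (0:ℝ) 1, (MM G P (F ε) r).PosDef := fun ε hε => MM_posDef hG hP (hFp ε hε) r
  have key : ∀ ε ∈ Set.Ioc (0:ℝ) 1, 0 ≤ rtr (MM G P C1 r * matPow (MM G P (F ε) r) (u * (1 - 1/u))) -
      rtr (MM G P C0 r * matPow (MM G P (F ε) r) (u * (1 - 1/u))) := by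
    intro ε hε
    have hε' : ε ∈ Set.Icc (0:ℝ) 1 := ⟨hε.1.le, hε.2⟩
    have hM := hMp ε hε'
    have hWp := dens_posDef hM u
    have b1 := holder_eq hM hu0.ne'
    have b2 := holder2 hM0 hWp (dens_rtr hM u) hu
    have b3 := Real.rpow_le_rpow (rtr_pos (matPow_posDef hM0 u)).le (hmin (F ε) (hFp ε hε') (hF1 ε))
      (show 0 ≤ 1/u by positivity)
    have b4 := conv_neg (hFp ε hε') hC0 hC1
      (NN_posDef hP (blk_posDef hG (matPow_posDef hWp (1 - 1/u)))) (t0 := 1 - ε) (t1 := ε)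
      (by linarith [hε.2]) hε.1.le (by ring) (psd_sub_self _) hr0 hr.le
    rw [← rtr_MM, ← rtr_MM, ← rtr_MM] at b4
    have b5 : 0 ≤ rtr (MM G P C1 r * matPow (dens (MM G P (F ε) r) u) (1 - 1/u)) -
      rtr (MM G P C0 r * matPow (dens (MM G P (F ε) r) u) (1 - 1/u)) := by
      have : 0 ≤ ε * (rtr (MM G P C1 r * matPow (dens (MM G P (F ε) r) u) (1 - 1/u)) -
        rtr (MM G P C0 r * matPow (dens (MM G P (F ε) r) u) (1 - 1/u))) := by linarith
      exact nonneg_of_mul_nonneg_right this hε.1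
    rw [dens_pow hM, Matrix.mul_smul, Matrix.mul_smul, rtr_smul, rtr_smul, ← mul_sub] at b5
    exact nonneg_of_mul_nonneg_right b5 (Real.rpow_pos_of_pos (rtr_pos (matPow_posDef hM u)) _)
  have hcM : ContinuousOn (fun ε => matPow (MM G P (F ε) r) (u * (1 - 1/u))) (Set.Icc (0:ℝ) 1) :=
    matPow_cont_comp (MM_contOn G P r hFc.continuousOn hFp) hMp _
  have hcc : ContinuousOn (fun ε => rtr (MM G P C1 r * matPow (MM G P (F ε) r) (u * (1 - 1/u))) -
      rtr (MM G P C0 r * matPow (MM G P (F ε) r) (u * (1 - 1/u)))) (Set.Icc (0:ℝ) 1) := by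
    have hφ : Continuous fun Y : Matrix (n × m) (n × m) ℂ => rtr (MM G P C1 r * Y) - rtr (MM G P C0 r * Y) :=
      (rtr_cont.comp (continuous_const.matrix_mul continuous_id)).sub
        (rtr_cont.comp (continuous_const.matrix_mul continuous_id))
    exact hφ.comp_continuousOn hcM
  have hlim := ((hcc 0 ⟨le_rfl, zero_le_one⟩).mono Set.Ioc_subset_Icc_self).tendsto
  haveI : (nhdsWithin (0:ℝ) (Set.Ioc 0 1)).NeBot := left_nhdsWithin_Ioc_neBot zero_lt_one
  have h0 := ge_of_tendsto hlim (Filter.eventually_of_mem self_mem_nhdsWithin key)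
  rw [hF0] at h0
  rw [dens_pow hM0, Matrix.mul_smul, Matrix.mul_smul, rtr_smul, rtr_smul]
  exact mul_le_mul_of_nonneg_left (by linarith) (Real.rpow_pos_of_pos (rtr_pos (matPow_posDef hM0 u)) _).le

end minimax

section fin
variable {n m : Type*} [Fintype n] [DecidableEq n] [Fintype m] [DecidableEq m]

lemma pow_aux {x y u : ℝ} (hx : 0 < x) (hu : 0 < u) (h : x ^ (1/u) ≤ y) : x ≤ y ^ u := by
  have := Real.rpow_le_rpow (by positivity) h hu.le
  rwa [← Real.rpow_mul hx.le, one_div_mul_cancel hu.ne', Real.rpow_one] at this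

lemma pow_aux' {x y u : ℝ} (hx : 0 < x) (hy : 0 ≤ y) (hu : 0 < u) (h : y ≤ x ^ (1/u)) : y ^ u ≤ x := by
  have := Real.rpow_le_rpow hy h hu.le
  rwa [← Real.rpow_mul hx.le, one_div_mul_cancel hu.ne', Real.rpow_one] at this

set_option maxHeartbeats 1000000 in
lemma G_conc [Nonempty n] [Nonempty m] {G : Matrix (n × m) (n × m) ℂ} (hG : IsUnit G)
    {B0 B1 : Matrix m m ℂ} (hB0 : B0.PosDef) (hB1 : B1.PosDef)
    {t0 t1 : ℝ} (ht0 : 0 ≤ t0) (ht1 : 0 ≤ t1) (ht : t0 + t1 = 1)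
    {q r u : ℝ} (hq0 : 0 < q) (hq1 : q ≤ 1) (hr0 : -1 ≤ r) (hr1 : r < 0) (hqr : 0 < q + r) (hu : 1 ≤ u)
    (huq : u * (q + r) ≤ 1) {C : Matrix m m ℂ} (hC : C.PosDef) (hC1 : rtr C = 1) :
    ∃ C0 : Matrix m m ℂ, C0.PosDef ∧ rtr C0 = 1 ∧ ∃ C1 : Matrix m m ℂ, C1.PosDef ∧ rtr C1 = 1 ∧
      rtr (matPow (MM G (matPow B0 q) C0 r) u) ^ t0 * rtr (matPow (MM G (matPow B1 q) C1 r) u) ^ t1 ≤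
        rtr (matPow (MM G (matPow ((t0 : ℂ) • B0 + (t1 : ℂ) • B1) q) C r) u) := by
  have hu0 : 0 < u := by linarith
  have hr' : 0 < 1 - r := by linarith
  have hP0 := matPow_posDef hB0 q
  have hP1 := matPow_posDef hB1 q
  have hP := matPow_posDef (mix_posDef hB0 hB1 ht0 ht1 ht) q
  obtain ⟨C0, hC0, hC01, W0, hW0, hW01, h0⟩ := strong_dual hG hP0 hu hr0 hr1
  obtain ⟨C1, hC1p, hC11, W1, hW1, hW11, h1⟩ := strong_dual hG hP1 hu hr0 hr1
  refine ⟨C0, hC0, hC01, C1, hC1p, hC11, ?_⟩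
  have hW := mix_posDef hW0 hW1 ht0 ht1 ht
  have hWt : rtr ((t0 : ℂ) • W0 + (t1 : ℂ) • W1) = 1 := by
    rw [rtr_add, rtr_smul, rtr_smul, hW01, hW11]; linarith
  have hw := weak_dual hG hP hC hC1 hW hWt hu hr1
  have hγ0 : 0 ≤ 1 - 1/u := by
    rw [sub_nonneg, div_le_one hu0]; exact hu
  have hγ1 : 1 - 1/u ≤ 1 - (q + r) := by
    have : q + r ≤ 1/u := by rw [le_div_iff₀ hu0]; linarith
    linarith
  have hJ := J_conc hG hB0 hB1 hW0 hW1 ht0 ht1 ht hq0 hq1 hr1 hqr hγ0 hγ1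
  have hN0 := NN_pos hP0 (blk_posDef hG (matPow_posDef hW0 (1 - 1/u))) (1/(1-r))
  have hN1 := NN_pos hP1 (blk_posDef hG (matPow_posDef hW1 (1 - 1/u))) (1/(1-r))
  have hN := NN_pos hP (blk_posDef hG (matPow_posDef hW (1 - 1/u))) (1/(1-r))
  have r0 := rtr_pos (matPow_posDef (MM_posDef hG hP0 hC0 r) u)
  have r1 := rtr_pos (matPow_posDef (MM_posDef hG hP1 hC1p r) u)
  have rr := rtr_pos (matPow_posDef (MM_posDef hG hP hC r) u)
  have a0 := pow_aux r0 hu0 h0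
  have a1 := pow_aux r1 hu0 h1
  have aa := pow_aux' rr (Real.rpow_nonneg hN.le _) hu0 hw
  rw [← Real.rpow_mul hN0.le] at a0
  rw [← Real.rpow_mul hN1.le] at a1
  rw [← Real.rpow_mul hN.le] at aa
  refine le_trans ?_ aa
  have := comb (b := 1) (b0 := 1) (b1 := 1) (β := 1) hN0 one_pos hN1 one_pos r0.le r1.le
    (α := (1 - r) * u) (mul_pos hr' hu0).le zero_le_one ht0 ht1 (by simpa using a0) (by simpa using a1) hJ (by simp)
  simpa using this

lemma trace_one {C : Matrix m m ℂ} (hC : C.PosDef) (h : rtr C = 1) : C.trace = 1 := by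
  have := hC.posSemidef.trace_nonneg
  have h2 := (Complex.le_def.mp this).2
  apply Complex.ext
  · simpa [rtr] using h
  · simpa using h2.symm

lemma Q_expr (K : Matrix (n × m) (n × m) ℂ) (p q r s : ℝ)
    {A : Matrix (n × m) (n × m) ℂ} {B : Matrix m m ℂ} (hA : A.PosDef) (hB : B.PosDef) (C : Matrix m m ℂ) :
    (Matrix.trace (matPow
      (matPow A (p / 2) * K *
        ((1 : Matrix n n ℂ) ⊗ₖ (matPow B (q / 2) * matPow C r * matPow B (q / 2))) *
        Kᴴ * matPow A (p / 2)) s)).re = NN (matPow A p) (MM K (matPow B q) C r) s := by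
  rw [NN, MM, matPow_matPow hA, matPow_matPow hB, mul_one_div, mul_one_div, rtr]
  simp only [Matrix.mul_assoc]

lemma Qinf_nonneg (K : Matrix (n × m) (n × m) ℂ) (hK : IsUnit K) (p q r s : ℝ)
    {A : Matrix (n × m) (n × m) ℂ} {B : Matrix m m ℂ} (hA : A.PosDef) (hB : B.PosDef) :
    0 ≤ Qinf K p q r s A B := by
  apply Real.sInf_nonneg
  rintro x ⟨C, hC, -, rfl⟩
  rw [Q_expr K p q r s hA hB]
  exact rtr_nonneg (matPow_posDef (NN_posDef (matPow_posDef hA p) (MM_posDef hK (matPow_posDef hB q) hC r)) s).posSemidef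

lemma Qinf_le (K : Matrix (n × m) (n × m) ℂ) (hK : IsUnit K) (p q r s : ℝ)
    {A : Matrix (n × m) (n × m) ℂ} {B : Matrix m m ℂ} (hA : A.PosDef) (hB : B.PosDef)
    {C : Matrix m m ℂ} (hC : C.PosDef) (hC1 : rtr C = 1) :
    Qinf K p q r s A B ≤ NN (matPow A p) (MM K (matPow B q) C r) s := by
  apply csInf_le
  · refine ⟨0, ?_⟩
    rintro x ⟨C, hC, -, rfl⟩
    rw [Q_expr K p q r s hA hB]
    exact rtr_nonneg (matPow_posDef (NN_posDef (matPow_posDef hA p) (MM_posDef hK (matPow_posDef hB q) hC r)) s).posSemidef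
  · exact ⟨C, hC, trace_one hC hC1, (Q_expr K p q r s hA hB C).symm⟩

lemma Qinf_empty [IsEmpty (n × m)] (K : Matrix (n × m) (n × m) ℂ) (p q r s : ℝ)
    (A : Matrix (n × m) (n × m) ℂ) (B : Matrix m m ℂ) : Qinf K p q r s A B = 0 := by
  apply le_antisymm
  · apply Real.sInf_nonpos
    rintro x ⟨C, -, -, rfl⟩
    simp [Matrix.trace]
  · apply Real.sInf_nonneg
    rintro x ⟨C, -, -, rfl⟩
    simp [Matrix.trace]

lemma NN_MM {Z : Matrix (n × m) (n × m) ℂ} (hZ : Z.PosDef) (K : Matrix (n × m) (n × m) ℂ)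
    (P C : Matrix m m ℂ) (r u : ℝ) :
    NN (matPow Z (-1)) (MM K P C r) u = rtr (matPow (MM (matPow Z (-(1/2)) * K) P C r) u) := by
  rw [NN, matPow_matPow hZ, show (-1 : ℝ) * (1/2) = -(1/2) by ring, MM, MM, Matrix.conjTranspose_mul,
    matPow_herm hZ]
  simp only [Matrix.mul_assoc]

lemma main_ne [Nonempty n] [Nonempty m]
    (K : Matrix (n × m) (n × m) ℂ) (hK : IsUnit K)
    (p q r s : ℝ) (hp0 : 0 < p) (hp1 : p ≤ 1) (hq0 : 0 < q) (hq1 : q ≤ 1)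
    (hr0 : -1 ≤ r) (hr1 : r < 0) (hqr : 0 < q + r) (hpqr : 0 < p + q + r)
    (hs1 : (q + r) / (p + q + r) ≤ s) (hs2 : s < 1 / (p + q + r))
    (A0 A1 : Matrix (n × m) (n × m) ℂ) (hA0 : A0.PosDef) (hA1 : A1.PosDef)
    (B0 B1 : Matrix m m ℂ) (hB0 : B0.PosDef) (hB1 : B1.PosDef)
    (t0 t1 : ℝ) (ht0 : 0 ≤ t0) (ht1 : 0 ≤ t1) (ht : t0 + t1 = 1) :
    Qinf K p q r s A0 B0 ^ t0 * Qinf K p q r s A1 B1 ^ t1 ≤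
    Qinf K p q r s ((t0 : ℂ) • A0 + (t1 : ℂ) • A1) ((t0 : ℂ) • B0 + (t1 : ℂ) • B1) := by
  have hA := mix_posDef hA0 hA1 ht0 ht1 ht
  have hB := mix_posDef hB0 hB1 ht0 ht1 ht
  have hs : 0 < s := lt_of_lt_of_le (by positivity) hs1
  have hs1' : q + r ≤ s * (p + q + r) := by rwa [div_le_iff₀ hpqr] at hs1
  have hs2' : s * (p + q + r) < 1 := by rwa [lt_div_iff₀ hpqr] at hs2
  obtain ⟨u, hu⟩ : ∃ u, u = s * (p + q + r) / (q + r) := ⟨_, rfl⟩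
  obtain ⟨v, hv⟩ : ∃ v, v = s * (p + q + r) / p := ⟨_, rfl⟩
  have hu1 : 1 ≤ u := by rw [hu, le_div_iff₀ hqr]; linarith
  have huq : u * (q + r) ≤ 1 := by rw [hu, div_mul_cancel₀ _ hqr.ne']; exact hs2'.le
  have hv0 : 0 < v := by rw [hv]; positivity
  have hvp : v * p ≤ 1 := by rw [hv, div_mul_cancel₀ _ hp0.ne']; exact hs2'.le
  have huv : 1/s = 1/u + 1/v := by
    rw [hu, hv, one_div_div, one_div_div, ← add_div, show q + r + p = p + q + r by ring]
    field_simp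
  have hu0 : 0 < u := by linarith
  apply le_csInf
  · exact ⟨_, dens 1 1, dens_posDef Matrix.PosDef.one 1,
      trace_one (dens_posDef Matrix.PosDef.one 1) (dens_rtr Matrix.PosDef.one 1), rfl⟩
  rintro x ⟨C, hC, hC1, rfl⟩
  have hC1' : rtr C = 1 := by rw [rtr, hC1]; simp
  rw [Q_expr K p q r s hA hB]
  have hPA0 := matPow_posDef hA0 p
  have hPA1 := matPow_posDef hA1 p
  have hX := fun {B C : Matrix m m ℂ} (hB : B.PosDef) (hC : C.PosDef) =>
    MM_posDef hK (matPow_posDef hB q) hC r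
  obtain ⟨Z, hZ, hZe⟩ := split_eq (matPow_posDef hA p) (hX hB hC) hs hu0 hv0 huv
  have hZi := matPow_posDef hZ (-1)
  obtain ⟨C0, hC0, hC01, C1, hC1p, hC11, hc⟩ := G_conc ((matPow_isUnit hZ (-(1/2))).mul hK) hB0 hB1
    ht0 ht1 ht hq0 hq1 hr0 hr1 hqr hu1 huq hC hC1'
  rw [← NN_MM hZ, ← NN_MM hZ, ← NN_MM hZ] at hc
  have ha := NN_conc hZ hA hA0 hA1 ht0 ht1 ht (psd_sub_self _) hp0.le hp1 hv0 hvp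
  have s0 := split_le hPA0 (hX hB0 hC0) hZ hs hu1 hv0 huv
  have s1 := split_le hPA1 (hX hB1 hC1p) hZ hs hu1 hv0 huv
  rw [hZe]
  exact comb (NN_pos hPA0 hZ _) (NN_pos hZi (hX hB0 hC0) _) (NN_pos hPA1 hZ _) (NN_pos hZi (hX hB1 hC1p) _)
    (Qinf_nonneg K hK p q r s hA0 hB0) (Qinf_nonneg K hK p q r s hA1 hB1) (by positivity) (by positivity) ht0 ht1
    ((Qinf_le K hK p q r s hA0 hB0 hC0 hC01).trans s0) ((Qinf_le K hK p q r s hA1 hB1 hC1p hC11).trans s1) ha hc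

end fin

/-- joint log-concavity of `(A,B) ↦ Q(A,B)` for
`0 < p,q ≤ 1`, `−1 ≤ r < 0`, `q+r > 0`, `p+q+r > 0` and
`(q+r)/(p+q+r) ≤ s < 1/(p+q+r)`. -/
theorem stmt1 {n₁ n₂ : Type*} [Fintype n₁] [DecidableEq n₁]
    [Fintype n₂] [DecidableEq n₂]
    (K : Matrix (n₁ × n₂) (n₁ × n₂) ℂ) (hK : IsUnit K)
    (p q r s : ℝ) (hp0 : 0 < p) (hp1 : p ≤ 1) (hq0 : 0 < q) (hq1 : q ≤ 1)
    (hr0 : -1 ≤ r) (hr1 : r < 0) (hqr : 0 < q + r) (hpqr : 0 < p + q + r)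
    (hs1 : (q + r) / (p + q + r) ≤ s) (hs2 : s < 1 / (p + q + r))
    (A₀ A₁ : Matrix (n₁ × n₂) (n₁ × n₂) ℂ) (hA₀ : A₀.PosDef) (hA₁ : A₁.PosDef)
    (B₀ B₁ : Matrix n₂ n₂ ℂ) (hB₀ : B₀.PosDef) (hB₁ : B₁.PosDef)
    (t : ℝ) (ht0 : 0 ≤ t) (ht1 : t ≤ 1) :
    Qinf K p q r s ((t : ℂ) • A₀ + ((1 - t : ℝ) : ℂ) • A₁)
        ((t : ℂ) • B₀ + ((1 - t : ℝ) : ℂ) • B₁) ≥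
      Qinf K p q r s A₀ B₀ ^ t * Qinf K p q r s A₁ B₁ ^ (1 - t) := by
  rcases isEmpty_or_nonempty (n₁ × n₂) with he | hne
  · rw [Qinf_empty, Qinf_empty, Qinf_empty]
    by_cases h : t = 0
    · subst h; simp
    · rw [Real.zero_rpow h, zero_mul]
  · obtain ⟨i, j⟩ := hne.some
    haveI : Nonempty n₁ := ⟨i⟩
    haveI : Nonempty n₂ := ⟨j⟩
    exact main_ne K hK p q r s hp0 hp1 hq0 hq1 hr0 hr1 hqr hpqr hs1 hs2 A₀ A₁ hA₀ hA₁ B₀ B₁ hB₀ hB₁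
      t (1 - t) ht0 (by linarith) (by ring)
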